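/- arXiv:1505.03210 — 2 statements merged into one kernel-verified Lean document; each statement's English description precedes it below -/
import Mathlib

section
/- Let r ≥ 4 and let H be an r-graph on s vertices that is embeddable in a 2-reducible r-tree, with cross-cut number σ = σ(H) ≥ 2; let β = 1/((r−2)(σ+1)+1). There exists n(r,s) such that for every n ≥ n(r,s), every real K ≥ 0, and every family F of r-subsets of [n] containing no copy of H with |F| ≥ (σ−1)·binom(n,r−1) − K·n^{r−1−β}, there exists a set A ⊆ [n] with |A| = σ−1 such that |L_F(A)| ≥ binom(n,r−1) − (r−1)(K+2s²)·n^{r−1−β}, and moreover the number of edges of F that do not meet A in exactly one vertex is at most ((σ−1)(r−1)(K+2s²)+2s²)·n^{r−1−β}. -/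
/-!
Write `b = r - 2` and let `t` be the number of vertices of a fixed 2-reducible `r`-tree `T`
containing `H`. Call an `(r - 1)`-set *rich* if it has more than `t` extensions to an edge of `F`.

*Embedding.* Every edge of `T` has two private vertices. A family of `k`-sets with more than
`t * n ^ (k - 1)` members contains a subfamily in which every `(k - 1)`-set covered by a member is
covered by more than `t` of them, and trees embed greedily in such a subfamily. Deleting private
vertices or cross-cut vertices from `T`, embedding the trimmed tree greedily and putting the deleted
vertices back yields, for an `H`-free family `F`:
* there are `O(n ^ (r - 2))` rich sets (`TreeData.card_rich_le`);
* any `σ` vertices have `O(n ^ (r - 2))` common neighbours in `F` (`TreeData.card_link_le`) and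
  `O(n ^ (r - 3))` common neighbours among the rich sets (`TreeData.card_rich_link_le`);
* all but `O(n ^ (r - 2))` edges of `F` have at most one `(r - 1)`-subset that is not rich
  (`TreeData.card_poor_le`).

*Counting.* An edge `e` with at most one non-rich `(r - 1)`-subset has a centre: a vertex `x ∈ e`
such that all `(r - 1)`-subsets of `e` through `x` are rich. The sets `e \ {x}` with centre `x` form
a family whose shadow lies in the link of `x` in the rich sets. By Kruskal–Katona, the vertices
that are the centre of fewer than `C(k₀, r - 1)` edges contribute at most `k₀ * O(n ^ (r - 2))`
edges, and the number `w` of other vertices satisfies `w * C(k₀, r - 2) = O(n ^ (r - 2))`. With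
`k₀` a small multiple of `n ^ (1 - β)` both errors are below `n ^ (r - 1 - β)`. An `(r - 1)`-set
has at most `σ - 1` centres among the `w` vertices, up to `w ^ σ * O(n ^ (r - 2))` exceptions, so
`|F| ≤ (σ - 1) C(n, r - 1) + n ^ (r - 1 - β)`, and if `F` is large, almost all `(r - 1)`-sets
have exactly `σ - 1` centres. Sorting these sets by their set `A` of centres gives classes whose
shadows are almost disjoint, because any `σ` vertices have few common rich neighbours. Kruskal–Katona
applied to each class shows that the largest class contains almost all `(r - 1)`-sets; its set `A`
is the required one (`counting`, `link_arith`).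
-/

open Finset
open scoped Classical

noncomputable section

variable {α β : Type*}

/-- The vertex set of a hypergraph given by its finite edge set. -/
def hverts [DecidableEq α] (H : Finset (Finset α)) : Finset α := H.sup id

/-- `E 0, E 1, …, E (m-1)` is a tree-defining ordering: every edge after the first
has a parent among the earlier edges containing its intersection with the union of
all earlier edges. -/
def IsTreeOrder {m : ℕ} [DecidableEq α] (E : Fin m → Finset α) : Prop :=
  ∀ i : Fin m, 0 < i.1 → ∃ j : Fin m, j < i ∧ E i ∩ (Finset.Iio i).sup E ⊆ E j

/-- A tight tree-defining ordering for an `r`-uniform hypergraph. -/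
def IsTightTreeOrder {m : ℕ} [DecidableEq α] (r : ℕ) (E : Fin m → Finset α) : Prop :=
  ∀ i : Fin m, 0 < i.1 → ∃ j : Fin m, j < i ∧ E i ∩ (Finset.Iio i).sup E ⊆ E j ∧
    (E i ∩ E j).card = r - 1

/-- `H` is an `r`-tree: its edges admit a tree-defining ordering (with multiplicities
allowed in the ordering), and all edges have `r` vertices. -/
def IsRTree [DecidableEq α] (r : ℕ) (H : Finset (Finset α)) : Prop :=
  ∃ (m : ℕ) (E : Fin m → Finset α),
    H = Finset.image E Finset.univ ∧ IsTreeOrder E ∧ ∀ i, (E i).card = r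

/-- `H` is a tight `r`-tree. -/
def IsTightRTree [DecidableEq α] (r : ℕ) (H : Finset (Finset α)) : Prop :=
  ∃ (m : ℕ) (E : Fin m → Finset α),
    H = Finset.image E Finset.univ ∧ IsTightTreeOrder r E ∧ ∀ i, (E i).card = r

/-- The degree of a vertex: the number of edges containing it. -/
def hdeg [DecidableEq α] (H : Finset (Finset α)) (x : α) : ℕ :=
  (H.filter (fun E => x ∈ E)).card

/-- `H` is `k`-reducible: every edge contains at least `k` vertices of degree 1. -/
def Reducible [DecidableEq α] (k : ℕ) (H : Finset (Finset α)) : Prop :=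
  ∀ E ∈ H, k ≤ (E.filter (fun x => hdeg H x = 1)).card

/-- `S` is a cross-cut of `H`: it meets every edge in exactly one vertex. -/
def IsCrossCut [DecidableEq α] (H : Finset (Finset α)) (S : Finset α) : Prop :=
  ∀ E ∈ H, (E ∩ S).card = 1

/-- The cross-cut number: minimum size of a cross-cut. -/
def crossCutNum [DecidableEq α] (H : Finset (Finset α)) : ℕ :=
  sInf {k | ∃ S : Finset α, IsCrossCut H S ∧ S.card = k}

/-- `S` is a vertex cover of `H`. -/
def IsVertexCover [DecidableEq α] (H : Finset (Finset α)) (S : Finset α) : Prop :=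
  ∀ E ∈ H, (E ∩ S).Nonempty

/-- The vertex cover number: minimum size of a vertex cover. -/
def coverNum [DecidableEq α] (H : Finset (Finset α)) : ℕ :=
  sInf {k | ∃ S : Finset α, IsVertexCover H S ∧ S.card = k}

/-- `G` contains a copy of `H`, i.e. `H` is embeddable in `G`. -/
def ContainsCopy [DecidableEq α] [DecidableEq β] (G : Finset (Finset β))
    (H : Finset (Finset α)) : Prop :=
  ∃ f : α → β, Set.InjOn f ↑(H.sup id) ∧ ∀ E ∈ H, E.image f ∈ G

/-- The Turán number `ex(n, H)`: the maximum size of an `r`-uniform family on `[n]`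
containing no copy of `H`. -/
def exNum [DecidableEq α] (n r : ℕ) (H : Finset (Finset α)) : ℕ :=
  sSup {N | ∃ F : Finset (Finset (Fin n)), (∀ E ∈ F, E.card = r) ∧
    ¬ ContainsCopy F H ∧ F.card = N}


/-- The common link `L_F(A)`: all sets `D ⊆ [n] ∖ A` with `D ∪ {a} ∈ F` for every `a ∈ A`. -/
def commonLink {n : ℕ} (F : Finset (Finset (Fin n))) (A : Finset (Fin n)) :
    Finset (Finset (Fin n)) :=
  Finset.univ.filter (fun D : Finset (Fin n) => Disjoint D A ∧ ∀ a ∈ A, insert a D ∈ F)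

/-- The exponent `β = 1/((r-2)(σ+1)+1)`. -/
def betaExp (r σ : ℕ) : ℝ := 1 / (((r : ℝ) - 2) * ((σ : ℝ) + 1) + 1)

/-! ### Full families and embeddings of trees -/

/-- `G` is `t`-full: deleting any vertex `v` from any member `g` leaves a set that lies in more
than `t` members of the form `insert w (g.erase v)`. -/
def FullFam {n : ℕ} (t : ℕ) (G : Finset (Finset (Fin n))) : Prop :=
  ∀ g ∈ G, ∀ v ∈ g,
    t < #{w : Fin n | w ∉ g.erase v ∧ insert w (g.erase v) ∈ G}

/-- Repeatedly deleting all members above a set of small degree destroys at most `t` members for each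
set of the shadow, so a family with more than `t * |∂G|` members has a nonempty full subfamily. -/
lemma exists_full {n : ℕ} (t : ℕ) (G : Finset (Finset (Fin n)))
    (h : t * #(G.shadow) < #G) : ∃ G' ⊆ G, G'.Nonempty ∧ FullFam t G' := by
  induction hN : #G using Nat.strong_induction_on generalizing G with
  | _ N ih =>
  by_cases hfull : FullFam t G
  · exact ⟨G, Subset.rfl, card_pos.1 (by omega), hfull⟩
  · unfold FullFam at hfull
    push Not at hfull
    obtain ⟨g, hg, v, hv, hle⟩ := hfull
    set Y := g.erase v with hY
    set Ws : Finset (Fin n) := {w : Fin n | w ∉ Y ∧ insert w Y ∈ G} with hWs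
    set G2 : Finset (Finset (Fin n)) := Ws.image (fun w => insert w Y) with hG2
    have hG2c : #G2 ≤ t := card_image_le.trans hle
    have hgG2 : g ∈ G2 := by
      rw [hG2, mem_image]
      refine ⟨v, ?_, insert_erase hv⟩
      simp [hWs, hY, insert_erase hv, hg]
    have hG2G : G2 ⊆ G := by
      intro x hx
      rw [hG2, mem_image] at hx
      obtain ⟨w, hw, rfl⟩ := hx
      simp only [hWs, mem_filter, mem_univ, true_and] at hw
      exact hw.2
    have hYsh : Y ∈ G.shadow := mem_shadow_iff.2 ⟨g, hg, v, hv, rfl⟩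
    have hsh : (G \ G2).shadow ⊆ G.shadow.erase Y := by
      intro Z hZ
      rw [mem_shadow_iff] at hZ
      obtain ⟨s, hs, a, ha, rfl⟩ := hZ
      rw [mem_sdiff] at hs
      refine mem_erase.2 ⟨?_, mem_shadow_iff.2 ⟨s, hs.1, a, ha, rfl⟩⟩
      intro hEq
      apply hs.2
      rw [hG2, mem_image]
      refine ⟨a, ?_, by rw [← hEq, insert_erase ha]⟩
      simp only [hWs, mem_filter, mem_univ, true_and]
      rw [← hEq, insert_erase ha]
      exact ⟨by simp, hs.1⟩
    have hshc : #((G \ G2).shadow) + 1 ≤ #(G.shadow) := by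
      have := card_le_card hsh
      rw [card_erase_of_mem hYsh] at this
      have := card_pos.2 ⟨Y, hYsh⟩
      omega
    have hc : #(G \ G2) + #G2 = #G := card_sdiff_add_card_eq_card hG2G
    have hpos : 0 < #G2 := card_pos.2 ⟨g, hgG2⟩
    have hmul : t * #((G \ G2).shadow) + t ≤ t * #(G.shadow) := by
      calc _ = t * (#((G \ G2).shadow) + 1) := by ring
        _ ≤ _ := Nat.mul_le_mul_left _ hshc
    obtain ⟨G', h1, h2⟩ := ih (#(G \ G2)) (by omega) (G \ G2) (by omega) rfl
    exact ⟨G', h1.trans sdiff_subset, h2⟩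

/-- In a full family, the vertices of `g` outside `Z` can be exchanged one at a time for vertices
avoiding a small forbidden set `B`. -/
lemma FullFam.avoid {n t : ℕ} {G : Finset (Finset (Fin n))} (hG : FullFam t G)
    {B Z : Finset (Fin n)} (hB : #B ≤ t) (g : Finset (Fin n)) (hg : g ∈ G) (hZ : Z ⊆ g) :
    ∃ g' ∈ G, Z ⊆ g' ∧ Disjoint (g' \ Z) B := by
  induction hN : #((g \ Z) ∩ B) using Nat.strong_induction_on generalizing g with
  | _ N ih =>
  by_cases hd : Disjoint (g \ Z) B
  · exact ⟨g, hg, hZ, hd⟩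
  · rw [not_disjoint_iff] at hd
    obtain ⟨v, hv, hvB⟩ := hd
    rw [mem_sdiff] at hv
    have hlt := hG g hg v hv.1
    obtain ⟨w, hw, hwB⟩ := exists_mem_notMem_of_card_lt_card (lt_of_le_of_lt hB hlt)
    simp only [mem_filter, mem_univ, true_and] at hw
    refine ih _ ?_ (insert w (g.erase v)) hw.2 ?_ rfl
    · rw [← hN]
      apply card_lt_card
      rw [Finset.ssubset_iff_of_subset]
      · refine ⟨v, by simp [hv, hvB], ?_⟩
        have : v ≠ w := fun h => hwB (h ▸ hvB)
        simp [this]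
      · intro x hx
        simp only [mem_inter, mem_sdiff, mem_insert, mem_erase] at hx ⊢
        grind
    · intro x hx
      refine mem_insert_of_mem (mem_erase.2 ⟨?_, hZ hx⟩)
      rintro rfl
      exact hv.2 hx

lemma exists_inj_maps {β : Type*} [Nonempty β] (s : Finset ℕ) (u : Finset β) (h : #s ≤ #u) :
    ∃ e : ℕ → β, Set.InjOn e s ∧ ∀ x ∈ s, e x ∈ u := by
  obtain ⟨f, hf, hinj⟩ := (s.finite_toSet).exists_injOn_of_encard_le (t := (u : Set β))
    (by simpa using h)
  exact ⟨f, hinj, fun x hx => by simpa using hf hx⟩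

lemma glue_injOn {β : Type*} {f e : ℕ → β} {P Q : Finset ℕ}
    (hf : Set.InjOn f P) (he : Set.InjOn e Q)
    (hfe : ∀ x ∈ P, ∀ y ∈ Q, f x ≠ e y) :
    Set.InjOn (fun x => if x ∈ Q then e x else f x) (↑(P ∪ Q) : Set ℕ) := by
  intro x hx y hy hxy
  simp only [coe_union, Set.mem_union, mem_coe] at hx hy
  simp only at hxy
  by_cases h1 : x ∈ Q <;> by_cases h2 : y ∈ Q <;> simp only [h1, h2, if_true, if_false] at hxy
  · exact he h1 h2 hxy
  · exact absurd hxy.symm (hfe y (by tauto) x h1)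
  · exact absurd hxy (hfe x (by tauto) y h2)
  · exact hf (by simpa [h1] using hx) (by simpa [h2] using hy) hxy

/-- A tree with edges of size at most `k` maps injectively into any nonempty full `k`-uniform
family, every edge landing inside some member. -/
lemma tree_embed {n m k t : ℕ} {E : Fin m → Finset ℕ} (hE : IsTreeOrder E)
    (hk : ∀ i, #(E i) ≤ k) (hV : #(univ.sup E) ≤ t) {G : Finset (Finset (Fin n))}
    (hG : FullFam t G) (hne : G.Nonempty) (hu : ∀ g ∈ G, #g = k) (f₀ : ℕ → Fin n) :
    ∃ f : ℕ → Fin n, Set.InjOn f (↑(univ.sup E) : Set ℕ) ∧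
      ∀ i, ∃ g ∈ G, (E i).image f ⊆ g := by
  have hpre : ∀ p ≤ m, ∃ f : ℕ → Fin n,
      Set.InjOn f (↑((univ.filter (fun i : Fin m => i.1 < p)).sup E) : Set ℕ) ∧
      ∀ i : Fin m, i.1 < p → ∃ g ∈ G, (E i).image f ⊆ g := by
    intro p
    induction p with
    | zero =>
      intro _
      exact ⟨f₀, by simp, by simp⟩
    | succ p ih =>
      intro hp
      obtain ⟨f, hf, hfG⟩ := ih (by omega)
      set U : Finset ℕ := (univ.filter (fun i : Fin m => i.1 < p)).sup E with hU
      set i : Fin m := ⟨p, by omega⟩ with hi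
      have hUi : (Finset.Iio i).sup E = U := by
        rw [hU]; congr 1; ext j; simp [hi, Fin.lt_def]
      have hUcard : #U ≤ t := (card_le_card (Finset.sup_mono (filter_subset _ _))).trans hV
      obtain ⟨g, hg, hZg⟩ : ∃ g ∈ G, (E i ∩ U).image f ⊆ g := by
        rcases Nat.eq_zero_or_pos p with h0 | h0
        · obtain ⟨g, hg⟩ := hne
          refine ⟨g, hg, ?_⟩
          have : U = ∅ := by rw [hU]; subst h0; simp
          simp [this]
        · obtain ⟨j, hj, hsub⟩ := hE i h0
          rw [hUi] at hsub
          obtain ⟨g, hg, hjg⟩ := hfG j hj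
          exact ⟨g, hg, (image_subset_image hsub).trans hjg⟩
      obtain ⟨g', hg', hZ', hdis⟩ := hG.avoid (B := U.image f) (card_image_le.trans hUcard) g hg hZg
      have hinjZ : #((E i ∩ U).image f) = #(E i ∩ U) :=
        card_image_of_injOn (hf.mono (by simp))
      have hcard : #(E i \ U) ≤ #(g' \ (E i ∩ U).image f) := by
        have h1 := card_sdiff_add_card_inter (E i) U
        have h2 := card_sdiff_add_card_eq_card hZ'
        have h3 := hu g' hg'
        have h4 := hk i
        omega
      have : Nonempty (Fin n) := ⟨f₀ 0⟩
      obtain ⟨e, he, hemaps⟩ := exists_inj_maps _ _ hcard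
      have hfe : ∀ x ∈ U, ∀ y ∈ E i \ U, f x ≠ e y := by
        intro x hx y hy hxy
        exact disjoint_left.1 hdis (hemaps y hy) (hxy ▸ mem_image_of_mem f hx)
      have hUnew : (univ.filter (fun j : Fin m => j.1 < p + 1)).sup E = U ∪ (E i \ U) := by
        have : univ.filter (fun j : Fin m => j.1 < p + 1)
            = insert i (univ.filter (fun j : Fin m => j.1 < p)) := by
          ext j
          simp only [mem_filter, mem_univ, true_and, mem_insert, hi, Fin.ext_iff]
          omega
        rw [this, sup_insert, ← hU]
        ext x; simp; tauto
      refine ⟨fun x => if x ∈ E i \ U then e x else f x, ?_, ?_⟩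
      · rw [hUnew]
        exact glue_injOn hf he hfe
      · intro j hj
        by_cases hjp : j.1 < p
        · obtain ⟨g, hg, hjg⟩ := hfG j hjp
          refine ⟨g, hg, ?_⟩
          rw [image_subset_iff] at hjg ⊢
          intro x hx
          have : x ∈ U := by rw [hU, mem_sup]; exact ⟨j, by simp [hjp], hx⟩
          simpa [this] using hjg x hx
        · have hji : j = i := Fin.ext (by simp [hi]; omega)
          rw [hji]
          refine ⟨g', hg', ?_⟩
          rw [image_subset_iff]
          intro x hx
          by_cases hxU : x ∈ U
          · have : f x ∈ g' := hZ' (mem_image_of_mem f (mem_inter.2 ⟨hx, hxU⟩))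
            simpa [hxU] using this
          · have hxm : x ∈ E i \ U := mem_sdiff.2 ⟨hx, hxU⟩
            simp only [hxm, if_true]
            exact (mem_sdiff.1 (hemaps x hxm)).1
  obtain ⟨f, hf, hfG⟩ := hpre m le_rfl
  have : univ.filter (fun i : Fin m => i.1 < m) = univ := by ext; simp
  rw [this] at hf
  exact ⟨f, hf, fun i => hfG i i.2⟩

lemma card_shadow_le {n k : ℕ} {G : Finset (Finset (Fin n))} (hu : ∀ g ∈ G, #g = k) :
    #(G.shadow) ≤ n.choose (k - 1) := by
  have hs : (G : Set (Finset (Fin n))).Sized k := fun g hg => hu g hg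
  have := hs.shadow.card_le
  simpa using this

/-- Trimmed trees embed in dense families: if removing the vertex set `R` leaves at most `k`
vertices in each edge of a tree with at most `t` vertices, then the trimmed tree is found in every
`k`-uniform family with more than `t * n ^ (k - 1)` members. -/
lemma trimmed_embed {n r k t : ℕ} {T : Finset (Finset ℕ)} (hT : IsRTree r T)
    (hV : #(T.sup id) ≤ t) (R : Finset ℕ) (hR : ∀ e ∈ T, #(e \ R) ≤ k)
    {G : Finset (Finset (Fin n))} (hu : ∀ g ∈ G, #g = k) (hk : 1 ≤ k)
    (hG : t * n ^ (k - 1) < #G) :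
    ∃ f : ℕ → Fin n, Set.InjOn f (↑(T.sup id \ R) : Set ℕ) ∧
      ∀ e ∈ T, ∃ g ∈ G, (e \ R).image f ⊆ g := by
  obtain ⟨m, E, rfl, hE, -⟩ := hT
  obtain ⟨G', hG', hne, hfull⟩ := exists_full t G
    (lt_of_le_of_lt (Nat.mul_le_mul_left t ((card_shadow_le hu).trans (Nat.choose_le_pow _ _))) hG)
  have hE' : IsTreeOrder (fun i => E i \ R) := by
    intro i hi
    obtain ⟨j, hj, hsub⟩ := hE i hi
    refine ⟨j, hj, ?_⟩
    intro x hx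
    simp only [mem_inter, mem_sdiff, mem_sup] at hx
    obtain ⟨⟨hx1, hx2⟩, l, hl, hx3, -⟩ := hx
    exact mem_sdiff.2 ⟨hsub (mem_inter.2 ⟨hx1, mem_sup.2 ⟨l, hl, hx3⟩⟩), hx2⟩
  have hsup : univ.sup (fun i => E i \ R) = (image E univ).sup id \ R := by
    ext x
    simp only [mem_sup, mem_univ, true_and, mem_sdiff, sup_image, Function.comp, id]
    tauto
  have hn : ∃ x : Fin n, True := by
    obtain ⟨g, hg⟩ := hne
    have := hu g (hG' hg)
    obtain ⟨x, -⟩ := card_pos.1 (by omega : 0 < #g)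
    exact ⟨x, trivial⟩
  obtain ⟨x0, -⟩ := hn
  obtain ⟨f, hf, hfG⟩ := tree_embed hE' (fun i => hR _ (mem_image_of_mem E (mem_univ i)))
    (by rw [hsup]; exact (card_le_card sdiff_subset).trans hV) hfull hne
    (fun g hg => hu g (hG' hg)) (fun _ => x0)
  rw [hsup] at hf
  refine ⟨f, hf, ?_⟩
  intro e he
  obtain ⟨i, -, rfl⟩ := mem_image.1 he
  obtain ⟨g, hg, hi⟩ := hfG i
  exact ⟨g, hG' hg, hi⟩

/-- Greedy extension: a map defined on the edges of `H` minus private sets `p e` extends to a copy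
of `H` if each partial image can be completed to a member of `F` avoiding any small set. -/
lemma extend_copy {n t : ℕ} {F : Finset (Finset (Fin n))} {H : Finset (Finset ℕ)}
    {p : Finset ℕ → Finset ℕ} (hp : ∀ e ∈ H, p e ⊆ e)
    (hpriv : ∀ e ∈ H, ∀ e' ∈ H, e ≠ e' → Disjoint (p e) e')
    {f : ℕ → Fin n} (hf : Set.InjOn f (↑(H.sup (fun e => e \ p e)) : Set ℕ))
    (ht : #(H.sup id) ≤ t)
    (hext : ∀ e ∈ H, ∀ B : Finset (Fin n), #B ≤ t →
      ∃ X : Finset (Fin n), Disjoint X B ∧ #X = #(p e) ∧ (e \ p e).image f ∪ X ∈ F) :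
    ContainsCopy F H := by
  set base := H.sup (fun e => e \ p e) with hbase
  have key : ∀ S : Finset (Finset ℕ), S ⊆ H → ∃ f2 : ℕ → Fin n,
      (∀ x ∈ base, f2 x = f x) ∧ Set.InjOn f2 (↑(base ∪ S.sup p) : Set ℕ) ∧
      ∀ e ∈ S, e.image f2 ∈ F := by
    intro S
    induction S using Finset.induction_on with
    | empty => intro _; exact ⟨f, by simp, by simpa using hf, by simp⟩
    | insert e S heS ih =>
      intro hS
      have heH : e ∈ H := hS (mem_insert_self _ _)
      have hSH : S ⊆ H := (subset_insert _ _).trans hS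
      obtain ⟨f2, hf'1, hf'2, hf'3⟩ := ih hSH
      set P := base ∪ S.sup p with hP
      have hPV : P ⊆ H.sup id := by
        intro x hx
        rw [hP, mem_union, hbase, mem_sup, mem_sup] at hx
        rw [mem_sup]
        rcases hx with ⟨a, ha, hx⟩ | ⟨a, ha, hx⟩
        · exact ⟨a, ha, (mem_sdiff.1 hx).1⟩
        · exact ⟨a, hSH ha, hp a (hSH ha) hx⟩
      obtain ⟨X, hX1, hX2, hX3⟩ := hext e heH (P.image f2)
        (card_image_le.trans ((card_le_card hPV).trans ht))
      have hPe : Disjoint P (p e) := by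
        rw [disjoint_left]
        intro x hx hxe
        rw [hP, mem_union, hbase, mem_sup, mem_sup] at hx
        rcases hx with ⟨a, ha, hx⟩ | ⟨a, ha, hx⟩
        · rw [mem_sdiff] at hx
          by_cases hea : e = a
          · subst hea; exact hx.2 hxe
          · exact disjoint_left.1 (hpriv e heH a ha hea) hxe hx.1
        · have hea : e ≠ a := fun h => heS (h ▸ ha)
          exact disjoint_left.1 (hpriv e heH a (hSH ha) hea) hxe (hp a (hSH ha) hx)
      rcases isEmpty_or_nonempty (Fin n) with hem | hem
      · exact (hem.false (f 0)).elim
      obtain ⟨q, hq, hqm⟩ := exists_inj_maps (p e) X hX2.ge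
      have hqim : (p e).image q = X := by
        apply eq_of_subset_of_card_le
        · rw [image_subset_iff]; exact hqm
        · rw [card_image_of_injOn hq, hX2]
      refine ⟨fun x => if x ∈ p e then q x else f2 x, ?_, ?_, ?_⟩
      · intro x hx
        have : x ∉ p e := disjoint_left.1 hPe (mem_union_left _ hx)
        simp [this, hf'1 x hx]
      · have : base ∪ (insert e S).sup p = P ∪ p e := by
          rw [sup_insert, hP, sup_eq_union, union_comm (p e), union_assoc]
        rw [this]
        refine glue_injOn hf'2 hq ?_
        intro x hx y hy hxy
        exact disjoint_left.1 hX1 (hqm y hy) (hxy ▸ mem_image_of_mem f2 hx)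
      · intro a ha
        rw [mem_insert] at ha
        rcases ha with rfl | ha
        · have : a.image (fun x => if x ∈ p a then q x else f2 x) = (a \ p a).image f ∪ X := by
            have hsplit : ∀ φ : ℕ → Fin n, a.image φ = (a \ p a).image φ ∪ (p a).image φ := by
              intro φ
              rw [← image_union, sdiff_union_of_subset (hp a heH)]
            rw [hsplit]
            congr 1
            · apply image_congr
              intro x hx
              have hx' : x ∈ a \ p a := hx
              have hxb : x ∈ base := by rw [hbase, mem_sup]; exact ⟨a, heH, hx'⟩
              simp [(mem_sdiff.1 hx').2, hf'1 x hxb]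
            · rw [← hqim]
              apply image_congr
              intro x hx
              have hx' : x ∈ p a := hx
              simp [hx']
          rw [this]; exact hX3
        · have hea : e ≠ a := fun h => heS (h ▸ ha)
          have : a.image (fun x => if x ∈ p e then q x else f2 x) = a.image f2 := by
            apply image_congr
            intro x hx
            have : x ∉ p e := fun h => disjoint_left.1 (hpriv e heH a (hSH ha) hea) h hx
            simp [this]
          rw [this]; exact hf'3 a ha
  obtain ⟨f2, -, h2, h3⟩ := key H Subset.rfl
  refine ⟨f2, h2.mono ?_, h3⟩
  intro x hx
  rw [mem_coe, mem_sup] at hx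
  obtain ⟨e, he, hx⟩ := hx
  rw [mem_coe, mem_union, hbase, mem_sup, mem_sup]
  by_cases hxp : x ∈ p e
  · exact Or.inr ⟨e, he, hxp⟩
  · exact Or.inl ⟨e, he, mem_sdiff.2 ⟨hx, hxp⟩⟩

/-! ### Consequences of being `H`-free -/

/-- The `(r - 1)`-sets contained in more than `t` members of `F`. -/
def richSets {n : ℕ} (r t : ℕ) (F : Finset (Finset (Fin n))) : Finset (Finset (Fin n)) :=
  {X ∈ powersetCard (r - 1) univ | t < #{w : Fin n | w ∉ X ∧ insert w X ∈ F}}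

/-- A tree `T` on at most `t` vertices containing `H`, a cross-cut `S` of `H`, and two
distinguished degree-one vertices `u e`, `v e` of each edge `e` of `T`; `u e` is chosen outside `S`
whenever `S` meets `e` in at most one vertex. -/
structure TreeData (r t : ℕ) (T H : Finset (Finset ℕ)) (S : Finset ℕ)
    (u v : Finset ℕ → ℕ) : Prop where
  tree : IsRTree r T
  sub : H ⊆ T
  card_le : #(T.sup id) ≤ t
  cross : ∀ e ∈ H, #(e ∩ S) = 1
  u_mem : ∀ e ∈ T, u e ∈ e
  v_mem : ∀ e ∈ T, v e ∈ e
  u_ne_v : ∀ e ∈ T, u e ≠ v e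
  u_priv : ∀ e ∈ T, ∀ e' ∈ T, u e ∈ e' → e = e'
  v_priv : ∀ e ∈ T, ∀ e' ∈ T, v e ∈ e' → e = e'
  u_notMem : ∀ e ∈ T, #(e ∩ S) ≤ 1 → u e ∉ S

namespace TreeData

variable {r t n : ℕ} {T H : Finset (Finset ℕ)} {S : Finset ℕ} {u v : Finset ℕ → ℕ}
  {F : Finset (Finset (Fin n))}

lemma card_edge (D : TreeData r t T H S u v) {e : Finset ℕ} (he : e ∈ T) : #e = r := by
  obtain ⟨m, E, rfl, -, hc⟩ := D.tree
  obtain ⟨i, -, rfl⟩ := mem_image.1 he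
  exact hc i

lemma card_H (D : TreeData r t T H S u v) : #(H.sup id) ≤ t :=
  (card_le_card (Finset.sup_mono D.sub)).trans D.card_le

/-- A copy in `richSets` of `H` with the private vertices `u e` removed extends to a copy of `H`. -/
lemma copy_of_rich (D : TreeData r t T H S u v) {f : ℕ → Fin n}
    (hf : Set.InjOn f (↑(H.sup (fun e => e \ {u e})) : Set ℕ))
    (hR : ∀ e ∈ H, (e \ {u e}).image f ∈ richSets r t F) : ContainsCopy F H := by
  refine extend_copy (t := t) (p := fun e => {u e})
    (fun e he => singleton_subset_iff.2 (D.u_mem e (D.sub he))) ?_ hf D.card_H ?_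
  · intro e he e' he' hne
    rw [disjoint_singleton_left]
    exact fun h => hne (D.u_priv e (D.sub he) e' (D.sub he') h)
  · intro e he B hB
    have h1 := hR e he
    rw [richSets, mem_filter] at h1
    obtain ⟨w, hw, hwB⟩ := exists_mem_notMem_of_card_lt_card (lt_of_le_of_lt hB h1.2)
    simp only [mem_filter, mem_univ, true_and] at hw
    refine ⟨{w}, by simpa using hwB, by simp, ?_⟩
    rw [union_comm, ← insert_eq]
    exact hw.2

lemma eq_of_image_subset {A : Finset ℕ} {f : ℕ → Fin n} {g : Finset (Fin n)} {k : ℕ}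
    (hf : Set.InjOn f (A : Set ℕ)) (hA : #A = k) (hg : #g = k) (h : A.image f ⊆ g) :
    A.image f = g :=
  eq_of_subset_of_card_le h (by rw [card_image_of_injOn hf, hA, hg])

lemma subset_sup {e : Finset ℕ} (he : e ∈ T) (R : Finset ℕ) : e \ R ⊆ T.sup id \ R :=
  sdiff_subset_sdiff (le_sup (f := id) he) Subset.rfl

/-- The tree `T` with one private vertex per edge removed would embed in a larger family of rich
sets, and richness puts the removed vertices back. -/
lemma card_rich_le (D : TreeData r t T H S u v) (hr : 4 ≤ r) (hF : ¬ ContainsCopy F H) :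
    #(richSets r t F) ≤ t * n ^ (r - 2) := by
  by_contra! hlt
  set R := T.image u with hRdef
  have hER : ∀ e ∈ T, e \ R = e \ {u e} := by
    intro e he
    ext x
    simp only [hRdef, mem_sdiff, mem_image, mem_singleton, and_congr_right_iff]
    intro hx
    constructor
    · rintro h rfl
      exact h ⟨e, he, rfl⟩
    · rintro h ⟨e', he', rfl⟩
      exact h (by rw [D.u_priv e' he' e he hx])
  have hcard : ∀ e ∈ T, #(e \ R) = r - 1 := by
    intro e he
    rw [hER e he, card_sdiff_of_subset (singleton_subset_iff.2 (D.u_mem e he)), D.card_edge he,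
      card_singleton]
  have hun : ∀ g ∈ richSets r t F, #g = r - 1 := by
    intro g hg
    rw [richSets, mem_filter, mem_powersetCard] at hg
    exact hg.1.2
  obtain ⟨f, hf, hfG⟩ := trimmed_embed D.tree D.card_le R (fun e he => (hcard e he).le) hun
    (by omega) (by rwa [show r - 1 - 1 = r - 2 by omega])
  apply hF
  refine D.copy_of_rich (f := f) (hf.mono ?_) ?_
  · intro x hx
    rw [mem_coe, mem_sup] at hx
    obtain ⟨e, he, hx⟩ := hx
    rw [← hER e (D.sub he)] at hx
    exact subset_sup (D.sub he) R hx
  · intro e he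
    obtain ⟨g, hg, hsub⟩ := hfG e (D.sub he)
    rw [← hER e (D.sub he), eq_of_image_subset (hf.mono (by exact_mod_cast subset_sup (D.sub he) R))
      (hcard e (D.sub he)) (hun g hg) hsub]
    exact hg

/-- If `H` minus the private parts `p e` minus the cross-cut is embedded in the common link of `A`,
where `|S| ≤ |A|`, then mapping `S` into `A` embeds `H` minus the private parts. -/
lemma attach_cross (D : TreeData r t T H S u v) {A : Finset (Fin n)} (hA : #S ≤ #A)
    {𝒢 : Finset (Finset (Fin n))} {p : Finset ℕ → Finset ℕ}
    (hp : ∀ e ∈ H, Disjoint (p e) S) {f : ℕ → Fin n}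
    (hf : Set.InjOn f (↑(H.sup (fun e => e \ p e) \ S) : Set ℕ))
    (hg : ∀ e ∈ H, ∀ a ∈ A, a ∉ ((e \ p e) \ S).image f ∧
      insert a (((e \ p e) \ S).image f) ∈ 𝒢) :
    ∃ f2 : ℕ → Fin n, Set.InjOn f2 (↑(H.sup (fun e => e \ p e)) : Set ℕ) ∧
      ∀ e ∈ H, (e \ p e).image f2 ∈ 𝒢 := by
  have : Nonempty (Fin n) := ⟨f 0⟩
  obtain ⟨q, hq, hqA⟩ := exists_inj_maps S A hA
  refine ⟨fun x => if x ∈ S then q x else f x, ?_, ?_⟩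
  · refine (glue_injOn hf hq ?_).mono ?_
    · intro x hx y hy hxy
      rw [mem_sdiff, mem_sup] at hx
      obtain ⟨⟨e, he, hxe⟩, hxS⟩ := hx
      refine (hg e he (q y) (hqA y hy)).1 ?_
      rw [← hxy]
      exact mem_image_of_mem f (mem_sdiff.2 ⟨hxe, hxS⟩)
    · intro x hx
      simp only [coe_union, coe_sdiff, Set.mem_union, Set.mem_sdiff, mem_coe] at hx ⊢
      tauto
  · intro e he
    obtain ⟨s, hs⟩ := card_eq_one.1 (D.cross e he)
    have hsm : s ∈ e ∩ S := by rw [hs]; simp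
    rw [mem_inter] at hsm
    have hsp : s ∉ p e := fun h => disjoint_left.1 (hp e he) h hsm.2
    have hsplit : e \ p e = insert s ((e \ p e) \ S) := by
      ext x
      have hx : x ∈ e ∩ S ↔ x = s := by rw [hs, mem_singleton]
      rw [mem_inter] at hx
      simp only [mem_insert, mem_sdiff]
      constructor
      · intro h
        by_cases hxS : x ∈ S
        · exact Or.inl (hx.1 ⟨h.1, hxS⟩)
        · exact Or.inr ⟨h, hxS⟩
      · rintro (rfl | h)
        · exact ⟨hsm.1, hsp⟩
        · exact h.1
    have him : (e \ p e).image (fun x => if x ∈ S then q x else f x)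
        = insert (q s) (((e \ p e) \ S).image f) := by
      conv_lhs => rw [hsplit, image_insert]
      congr 1
      · simp [hsm.2]
      · apply image_congr
        intro x hx
        have : x ∉ S := (mem_sdiff.1 (mem_coe.1 hx)).2
        simp [this]
    rw [him]
    exact (hg e he (q s) (hqA s hsm.2)).2

/-- A larger common link would contain `T` trimmed by the cross-cut (or by a private vertex where the
edge misses it); mapping the cross-cut into `A` then gives a copy of `H`. -/
lemma card_link_le (D : TreeData r t T H S u v) (hr : 4 ≤ r) (hF : ¬ ContainsCopy F H)
    {A : Finset (Fin n)} (hA : #S ≤ #A) :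
    #{X ∈ powersetCard (r - 1) univ | ∀ a ∈ A, a ∉ X ∧ insert a X ∈ F} ≤ t * n ^ (r - 2) := by
  by_contra! hlt
  set G : Finset (Finset (Fin n)) :=
    {X ∈ powersetCard (r - 1) univ | ∀ a ∈ A, a ∉ X ∧ insert a X ∈ F} with hG
  have hun : ∀ g ∈ G, #g = r - 1 := by
    intro g hg
    rw [hG, mem_filter, mem_powersetCard] at hg
    exact hg.1.2
  set R := S ∪ (T.filter (fun e => #(e ∩ S) = 0)).image u with hRdef
  have hSR : S ⊆ R := subset_union_left
  have hER : ∀ e ∈ H, e \ R = e \ S := by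
    intro e he
    apply Subset.antisymm (sdiff_subset_sdiff Subset.rfl hSR)
    intro x hx
    rw [mem_sdiff] at hx ⊢
    refine ⟨hx.1, ?_⟩
    rw [hRdef, mem_union, mem_image]
    rintro (h | ⟨e', he', rfl⟩)
    · exact hx.2 h
    · rw [mem_filter] at he'
      have := D.u_priv e' he'.1 e (D.sub he) hx.1
      subst this
      have := D.cross e' he
      omega
  have hRcard : ∀ e ∈ T, #(e \ R) ≤ r - 1 := by
    intro e he
    have hc := D.card_edge he
    have hpos : 0 < #(e ∩ R) := by
      rw [card_pos]
      by_cases h0 : #(e ∩ S) = 0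
      · refine ⟨u e, mem_inter.2 ⟨D.u_mem e he, mem_union_right _ (mem_image_of_mem u ?_)⟩⟩
        exact mem_filter.2 ⟨he, h0⟩
      · exact (card_pos.1 (Nat.pos_of_ne_zero h0)).mono (inter_subset_inter Subset.rfl hSR)
    have := card_sdiff_add_card_inter e R
    omega
  obtain ⟨f, hf, hfG⟩ := trimmed_embed D.tree D.card_le R hRcard hun
    (by omega) (by rwa [show r - 1 - 1 = r - 2 by omega])
  have himg : ∀ e ∈ H, (e \ S).image f ∈ G := by
    intro e he
    obtain ⟨g, hg, hsub⟩ := hfG e (D.sub he)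
    have hc : #(e \ R) = r - 1 := by
      rw [hER e he]
      have := card_sdiff_add_card_inter e S
      have := D.cross e he
      have := D.card_edge (D.sub he)
      omega
    rw [← hER e he, eq_of_image_subset (hf.mono (by exact_mod_cast subset_sup (D.sub he) R))
      hc (hun g hg) hsub]
    exact hg
  have hinj : Set.InjOn f (↑(H.sup (fun e => e \ ∅) \ S) : Set ℕ) := by
    refine hf.mono ?_
    intro x hx
    rw [mem_coe, mem_sdiff, mem_sup] at hx
    obtain ⟨⟨e, he, hx⟩, hxS⟩ := hx
    rw [sdiff_empty] at hx
    apply subset_sup (D.sub he) R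
    rw [hER e he]
    exact mem_sdiff.2 ⟨hx, hxS⟩
  obtain ⟨f2, hf2, hf2F⟩ := D.attach_cross hA (𝒢 := F) (p := fun _ => ∅) (by simp) hinj (by
    intro e he a ha
    have := himg e he
    rw [hG, mem_filter] at this
    simpa using this.2 a ha)
  simp only [sdiff_empty] at hf2 hf2F
  exact hF ⟨f2, hf2, hf2F⟩

/-- As `card_link_le`, with a private vertex removed from each edge as well and put back by
richness. -/
lemma card_rich_link_le (D : TreeData r t T H S u v) (hr : 4 ≤ r) (hF : ¬ ContainsCopy F H)
    {A : Finset (Fin n)} (hA : #S ≤ #A) :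
    #{X ∈ powersetCard (r - 2) univ | ∀ a ∈ A, a ∉ X ∧ insert a X ∈ richSets r t F}
      ≤ t * n ^ (r - 3) := by
  by_contra! hlt
  set G : Finset (Finset (Fin n)) :=
    {X ∈ powersetCard (r - 2) univ | ∀ a ∈ A, a ∉ X ∧ insert a X ∈ richSets r t F} with hG
  have hun : ∀ g ∈ G, #g = r - 2 := by
    intro g hg
    rw [hG, mem_filter, mem_powersetCard] at hg
    exact hg.1.2
  -- Every edge of `T` must lose two vertices: vertices of `S` first, then degree-one vertices.
  set R := S ∪ ((T.filter (fun e => #(e ∩ S) ≤ 1)).image u ∪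
    (T.filter (fun e => #(e ∩ S) = 0)).image v) with hRdef
  have hSR : S ⊆ R := subset_union_left
  have huR : ∀ e ∈ T, #(e ∩ S) ≤ 1 → u e ∈ R := fun e he h =>
    mem_union_right _ (mem_union_left _ (mem_image_of_mem u (mem_filter.2 ⟨he, h⟩)))
  have hvR : ∀ e ∈ T, #(e ∩ S) = 0 → v e ∈ R := fun e he h =>
    mem_union_right _ (mem_union_right _ (mem_image_of_mem v (mem_filter.2 ⟨he, h⟩)))
  have huS : ∀ e ∈ H, u e ∉ S := fun e he => D.u_notMem e (D.sub he) (D.cross e he).le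
  have hER : ∀ e ∈ H, e \ R = (e \ {u e}) \ S := by
    intro e he
    ext x
    simp only [mem_sdiff, mem_singleton]
    constructor
    · rintro ⟨h1, h2⟩
      refine ⟨⟨h1, ?_⟩, fun h => h2 (hSR h)⟩
      rintro rfl
      exact h2 (huR e (D.sub he) (D.cross e he).le)
    · rintro ⟨⟨h1, h2⟩, h3⟩
      refine ⟨h1, ?_⟩
      rw [hRdef, mem_union, mem_union, mem_image, mem_image]
      rintro (h | ⟨e', he', rfl⟩ | ⟨e', he', rfl⟩)
      · exact h3 h
      · rw [mem_filter] at he'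
        exact h2 (by rw [D.u_priv e' he'.1 e (D.sub he) h1])
      · rw [mem_filter] at he'
        have := D.v_priv e' he'.1 e (D.sub he) h1
        subst this
        have := D.cross e' he
        omega
  have hRcard : ∀ e ∈ T, #(e \ R) ≤ r - 2 := by
    intro e he
    have hc := D.card_edge he
    have h2 : 2 ≤ #(e ∩ R) := by
      have hmono : e ∩ S ⊆ e ∩ R := inter_subset_inter Subset.rfl hSR
      rcases Nat.lt_or_ge 1 #(e ∩ S) with h | h
      · exact le_trans h (card_le_card hmono)
      · have hu : u e ∈ e ∩ R := mem_inter.2 ⟨D.u_mem e he, huR e he h⟩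
        rcases Nat.eq_zero_or_pos #(e ∩ S) with h0 | h0
        · have hv : v e ∈ e ∩ R := mem_inter.2 ⟨D.v_mem e he, hvR e he h0⟩
          rw [← card_pair (D.u_ne_v e he)]
          exact card_le_card (by simp [insert_subset_iff, hu, hv])
        · have hu' : u e ∉ e ∩ S := fun hh => D.u_notMem e he h (mem_inter.1 hh).2
          have := card_le_card (insert_subset_iff.2 ⟨hu, hmono⟩)
          rw [card_insert_of_notMem hu'] at this
          omega
    have := card_sdiff_add_card_inter e R
    omega
  obtain ⟨f, hf, hfG⟩ := trimmed_embed D.tree D.card_le R hRcard hun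
    (by omega) (by rwa [show r - 2 - 1 = r - 3 by omega])
  have himg : ∀ e ∈ H, ((e \ {u e}) \ S).image f ∈ G := by
    intro e he
    obtain ⟨g, hg, hsub⟩ := hfG e (D.sub he)
    have hc : #(e \ R) = r - 2 := by
      have h1 := card_sdiff_add_card_inter (e \ {u e}) S
      have h2 : (e \ {u e}) ∩ S = e ∩ S := by
        ext x
        simp only [mem_inter, mem_sdiff, mem_singleton]
        have := huS e he
        grind
      have h3 := card_sdiff_of_subset (singleton_subset_iff.2 (D.u_mem e (D.sub he)))
      have h4 := D.cross e he
      have h5 := D.card_edge (D.sub he)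
      rw [hER e he]
      rw [h2] at h1
      rw [card_singleton] at h3
      omega
    rw [← hER e he, eq_of_image_subset (hf.mono (by exact_mod_cast subset_sup (D.sub he) R))
      hc (hun g hg) hsub]
    exact hg
  have hinj : Set.InjOn f (↑(H.sup (fun e => e \ {u e}) \ S) : Set ℕ) := by
    refine hf.mono ?_
    intro x hx
    rw [mem_coe, mem_sdiff, mem_sup] at hx
    obtain ⟨⟨e, he, hx⟩, hxS⟩ := hx
    apply subset_sup (D.sub he) R
    rw [hER e he]
    exact mem_sdiff.2 ⟨hx, hxS⟩
  obtain ⟨f2, hf2, hf2F⟩ := D.attach_cross hA (𝒢 := richSets r t F) (p := fun e => {u e})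
    (fun e he => by simpa using huS e he) hinj (by
      intro e he a ha
      have := himg e he
      rw [hG, mem_filter] at this
      exact this.2 a ha)
  exact hF (D.copy_of_rich hf2 hf2F)

/-- Few members of `F` contain two `(r - 1)`-subsets that are not rich. For an `(r - 2)`-set `Y`,
the pairs completing `Y` to such a member form a graph of maximum degree at most `t`; if this graph
has more than `t * t` edges then it contains edges avoiding any `t` prescribed vertices, so the
number of such `Y` is bounded by embedding `T` with two private vertices removed from each edge. -/
lemma card_poor_le (D : TreeData r t T H S u v) (hr : 4 ≤ r) (hFr : ∀ e ∈ F, #e = r)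
    (hF : ¬ ContainsCopy F H) :
    #{e ∈ F | ∃ x ∈ e, ∃ y ∈ e, x ≠ y ∧ e.erase x ∉ richSets r t F ∧ e.erase y ∉ richSets r t F}
      ≤ 2 * (t * t) * n ^ (r - 2) := by
  set P : Finset (Fin n) → Finset (Finset (Fin n)) := fun Y =>
    {e ∈ F | Y ⊆ e ∧ ∀ x ∈ e \ Y, e.erase x ∉ richSets r t F} with hP
  set 𝒴 : Finset (Finset (Fin n)) := powersetCard (r - 2) univ with h𝒴
  have hcov : ({e ∈ F | ∃ x ∈ e, ∃ y ∈ e, x ≠ y ∧ e.erase x ∉ richSets r t F ∧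
      e.erase y ∉ richSets r t F} : Finset (Finset (Fin n))) ⊆ 𝒴.biUnion P := by
    intro e he
    rw [mem_filter] at he
    obtain ⟨heF, x, hx, y, hy, hxy, h1, h2⟩ := he
    rw [mem_biUnion]
    refine ⟨e \ {x, y}, ?_, ?_⟩
    · rw [h𝒴, mem_powersetCard]
      refine ⟨subset_univ _, ?_⟩
      rw [card_sdiff_of_subset (by simp [insert_subset_iff, hx, hy]), hFr e heF, card_pair hxy]
    · simp only [hP, mem_filter]
      refine ⟨heF, sdiff_subset, ?_⟩
      intro z hz
      have : z = x ∨ z = y := by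
        simp only [mem_sdiff, mem_insert, mem_singleton] at hz
        tauto
      rcases this with rfl | rfl
      · exact h1
      · exact h2
  -- degree bound in the link graph of `Y`
  have hdeg : ∀ Y ∈ 𝒴, ∀ z, z ∉ Y → #{e ∈ P Y | z ∈ e} ≤ t := by
    intro Y hY z hz
    rw [h𝒴, mem_powersetCard] at hY
    have hYz : #(insert z Y) = r - 1 := by
      rw [card_insert_of_notMem hz, hY.2]; omega
    have hform : ∀ e ∈ P Y, z ∈ e → ∃ w, w ∉ insert z Y ∧ insert w (insert z Y) = e := by
      intro e he hze
      simp only [hP, mem_filter] at he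
      have hsub : insert z Y ⊆ e := insert_subset_iff.2 ⟨hze, he.2.1⟩
      have hc : #(e \ insert z Y) = 1 := by
        rw [card_sdiff_of_subset hsub, hFr e he.1, hYz]; omega
      obtain ⟨w, hw⟩ := card_eq_one.1 hc
      have hwm : w ∈ e \ insert z Y := by rw [hw]; simp
      refine ⟨w, (mem_sdiff.1 hwm).2, ?_⟩
      rw [insert_eq, ← hw, sdiff_union_of_subset hsub]
    rcases Finset.eq_empty_or_nonempty {e ∈ P Y | z ∈ e} with h0 | ⟨e, he⟩
    · rw [h0]; simp
    · have hnr : insert z Y ∉ richSets r t F := by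
        rw [mem_filter] at he
        obtain ⟨w, hw, hwe⟩ := hform e he.1 he.2
        have heP := he.1
        simp only [hP, mem_filter] at heP
        have := heP.2.2 w (mem_sdiff.2 ⟨by rw [← hwe]; simp, fun h => hw (mem_insert_of_mem h)⟩)
        rwa [← hwe, erase_insert hw] at this
      have hle : #{w : Fin n | w ∉ insert z Y ∧ insert w (insert z Y) ∈ F} ≤ t := by
        by_contra! hlt
        exact hnr (mem_filter.2 ⟨mem_powersetCard.2 ⟨subset_univ _, hYz⟩, hlt⟩)
      refine le_trans ?_ hle
      refine le_trans (card_le_card ?_) (card_image_le (f := fun w => insert w (insert z Y)))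
      intro e' he'
      rw [mem_filter] at he'
      obtain ⟨w, hw, rfl⟩ := hform e' he'.1 he'.2
      have := he'.1
      simp only [hP, mem_filter] at this
      exact mem_image_of_mem _ (mem_filter.2 ⟨mem_univ _, hw, this.1⟩)
  have hmeet : ∀ Y ∈ 𝒴, ∀ B : Finset (Fin n), #{e ∈ P Y | ¬ Disjoint (e \ Y) B} ≤ #B * t := by
    intro Y hY B
    have hsub : ({e ∈ P Y | ¬ Disjoint (e \ Y) B} : Finset (Finset (Fin n)))
        ⊆ (B \ Y).biUnion (fun z => {e ∈ P Y | z ∈ e}) := by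
      intro e he
      rw [mem_filter, not_disjoint_iff] at he
      obtain ⟨he, z, hz, hzB⟩ := he
      rw [mem_sdiff] at hz
      exact mem_biUnion.2 ⟨z, mem_sdiff.2 ⟨hzB, hz.2⟩, mem_filter.2 ⟨he, hz.1⟩⟩
    refine (card_le_card hsub).trans ((card_biUnion_le_card_mul _ _ t ?_).trans ?_)
    · intro z hz
      exact hdeg Y hY z (mem_sdiff.1 hz).2
    · exact Nat.mul_le_mul_right _ (card_le_card sdiff_subset)
  have hPn : ∀ Y ∈ 𝒴, #(P Y) ≤ n * t := by
    intro Y hY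
    have h1 := hmeet Y hY univ
    rw [card_univ, Fintype.card_fin] at h1
    refine le_trans (card_le_card ?_) h1
    intro e he
    refine mem_filter.2 ⟨he, ?_⟩
    simp only [hP, mem_filter] at he
    rw [h𝒴, mem_powersetCard] at hY
    have : 0 < #(e \ Y) := by
      rw [card_sdiff_of_subset he.2.1, hFr e he.1, hY.2]; omega
    obtain ⟨x, hx⟩ := card_pos.1 this
    exact not_disjoint_iff.2 ⟨x, hx, mem_univ _⟩
  set Q := 𝒴.filter (fun Y => t * t < #(P Y)) with hQ
  have hQcard : #Q ≤ t * n ^ (r - 3) := by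
    by_contra! hlt
    have hun : ∀ g ∈ Q, #g = r - 2 := by
      intro g hg
      rw [hQ, mem_filter, h𝒴, mem_powersetCard] at hg
      exact hg.1.2
    set R := T.image u ∪ T.image v with hRdef
    have hER : ∀ e ∈ T, e \ R = e \ {u e, v e} := by
      intro e he
      ext x
      simp only [hRdef, mem_sdiff, mem_union, mem_image, mem_insert, mem_singleton,
        and_congr_right_iff]
      intro hx
      constructor
      · rintro h (rfl | rfl)
        · exact h (Or.inl ⟨e, he, rfl⟩)
        · exact h (Or.inr ⟨e, he, rfl⟩)
      · rintro h (⟨e', he', rfl⟩ | ⟨e', he', rfl⟩)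
        · exact h (Or.inl (by rw [D.u_priv e' he' e he hx]))
        · exact h (Or.inr (by rw [D.v_priv e' he' e he hx]))
    have huv : ∀ e ∈ T, ({u e, v e} : Finset ℕ) ⊆ e := fun e he => by
      simp [insert_subset_iff, D.u_mem e he, D.v_mem e he]
    have hcard : ∀ e ∈ T, #(e \ R) = r - 2 := by
      intro e he
      rw [hER e he, card_sdiff_of_subset (huv e he), D.card_edge he, card_pair (D.u_ne_v e he)]
    obtain ⟨f, hf, hfG⟩ := trimmed_embed D.tree D.card_le R (fun e he => (hcard e he).le) hun
      (by omega) (by rwa [show r - 2 - 1 = r - 3 by omega])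
    apply hF
    refine extend_copy (t := t) (p := fun e => {u e, v e}) (f := f)
      (fun e he => huv e (D.sub he)) ?_ (hf.mono ?_) D.card_H ?_
    · intro e he e' he' hne
      simp only [disjoint_insert_left, disjoint_singleton_left]
      exact ⟨fun h => hne (D.u_priv e (D.sub he) e' (D.sub he') h),
        fun h => hne (D.v_priv e (D.sub he) e' (D.sub he') h)⟩
    · intro x hx
      rw [mem_coe, mem_sup] at hx
      obtain ⟨e, he, hx⟩ := hx
      rw [← hER e (D.sub he)] at hx
      exact subset_sup (D.sub he) R hx
    · intro e he B hB
      obtain ⟨Y, hY, hsub⟩ := hfG e (D.sub he)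
      rw [← hER e (D.sub he),
        eq_of_image_subset (hf.mono (by exact_mod_cast subset_sup (D.sub he) R))
          (hcard e (D.sub he)) (hun Y hY) hsub]
      rw [hQ, mem_filter] at hY
      obtain ⟨e', he', hdis⟩ : ∃ e' ∈ P Y, Disjoint (e' \ Y) B := by
        by_contra! hcon
        have h1 := hmeet Y hY.1 B
        rw [filter_true_of_mem hcon] at h1
        have h2 := Nat.mul_le_mul_right t hB
        omega
      simp only [hP, mem_filter] at he'
      refine ⟨e' \ Y, hdis, ?_, ?_⟩
      · have hYc := hY.1
        rw [h𝒴, mem_powersetCard] at hYc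
        rw [card_sdiff_of_subset he'.2.1, hFr e' he'.1, hYc.2, card_pair (D.u_ne_v e (D.sub he))]
        omega
      · rw [union_comm, sdiff_union_of_subset he'.2.1]
        exact he'.1
  have h𝒴card : #𝒴 ≤ n ^ (r - 2) := by
    rw [h𝒴, card_powersetCard, card_univ, Fintype.card_fin]
    exact Nat.choose_le_pow _ _
  calc _ ≤ #(𝒴.biUnion P) := card_le_card hcov
    _ ≤ ∑ Y ∈ 𝒴, #(P Y) := card_biUnion_le
    _ = ∑ Y ∈ Q, #(P Y) + ∑ Y ∈ 𝒴 with ¬ t * t < #(P Y), #(P Y) :=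
        (sum_filter_add_sum_filter_not _ _ _).symm
    _ ≤ #Q * (n * t) + #𝒴 * (t * t) := by
        apply Nat.add_le_add
        · apply sum_le_card_nsmul
          intro Y hY
          exact hPn Y (mem_filter.1 hY).1
        · refine (sum_le_card_nsmul _ _ (t * t) ?_).trans ?_
          · intro Y hY
            exact not_lt.1 (mem_filter.1 hY).2
          · exact Nat.mul_le_mul_right _ (card_le_card (filter_subset _ _))
    _ ≤ (t * n ^ (r - 3)) * (n * t) + n ^ (r - 2) * (t * t) := by gcongr
    _ = 2 * (t * t) * n ^ (r - 2) := by
        obtain ⟨k, rfl⟩ : ∃ k, r = k + 3 := ⟨r - 3, by omega⟩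
        rw [show k + 3 - 3 = k by omega, show k + 3 - 2 = k + 1 by omega, pow_succ]
        ring

end TreeData

/-! ### Counting -/

/-- Kruskal–Katona in ratio form: a `k`-uniform family with fewer than `m.choose k` members
satisfies `|𝒜| ≤ (m / k) |∂𝒜|`. -/
lemma kk_ratio {n k m : ℕ} {𝒜 : Finset (Finset (Fin n))}
    (hs : (𝒜 : Set (Finset (Fin n))).Sized k) (hk : 1 ≤ k) (hlt : #𝒜 < m.choose k) :
    k * #𝒜 ≤ m * #(𝒜.shadow) := by
  rcases Nat.eq_zero_or_pos #𝒜 with h0 | hpos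
  · simp [h0]
  have hex : ∃ j : ℕ, #𝒜 < j.choose k := ⟨m, hlt⟩
  obtain ⟨j, hj, hjmin⟩ : ∃ j : ℕ, #𝒜 < j.choose k ∧ ∀ i < j, ¬ #𝒜 < i.choose k :=
    ⟨Nat.find hex, Nat.find_spec hex, fun i hi => Nat.find_min hex hi⟩
  have hjm : j ≤ m := by
    by_contra! h
    exact hjmin m h hlt
  have hkj : k < j := by
    by_contra! h
    rcases Nat.lt_or_eq_of_le h with h | h
    · rw [Nat.choose_eq_zero_of_lt h] at hj; omega
    · rw [h, Nat.choose_self] at hj; omega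
  obtain ⟨i, rfl⟩ : ∃ i, j = i + 1 := ⟨j - 1, by omega⟩
  have hi : i.choose k ≤ #𝒜 := not_lt.1 (hjmin i (by omega))
  have hAn : #𝒜 ≤ n.choose k := by simpa using hs.card_le
  obtain ⟨l, rfl⟩ : ∃ l, k = l + 1 := ⟨k - 1, by omega⟩
  have hin : i ≤ n := by
    by_contra! h
    have h1 : (n + 1).choose (l + 1) ≤ i.choose (l + 1) := Nat.choose_le_choose _ h
    rw [Nat.choose_succ_succ'] at h1
    have h2 : n.choose l = 0 := by omega
    rw [Nat.choose_eq_zero_iff] at h2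
    have h3 : n.choose (l + 1) = 0 := Nat.choose_eq_zero_of_lt (by omega)
    omega
  have hkk := kruskal_katona_lovasz_form (i := 1) (by omega : 1 ≤ l + 1) (by omega) hin hs hi
  simp only [Function.iterate_one, Nat.add_sub_cancel] at hkk
  calc (l + 1) * #𝒜 ≤ (l + 1) * (i + 1).choose (l + 1) := Nat.mul_le_mul_left _ hj.le
    _ = (i + 1) * i.choose l := by rw [Nat.add_one_mul_choose_eq, mul_comm]
    _ ≤ m * #(𝒜.shadow) := Nat.mul_le_mul hjm hkk

/-- The sets `X` such that `insert x X` is an edge of `F` with centre `x`: all its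
`(r - 1)`-subsets through `x` are in `𝒦`, where `r = b + 2`. -/
def centered {n : ℕ} (F 𝒦 : Finset (Finset (Fin n))) (b : ℕ) (x : Fin n) :
    Finset (Finset (Fin n)) :=
  {X ∈ powersetCard (b + 1) univ | x ∉ X ∧ insert x X ∈ F ∧ ∀ y ∈ X, insert x (X.erase y) ∈ 𝒦}

/-- The link of `x` in `𝒦`, restricted to `b`-sets. -/
def linkAt {n : ℕ} (𝒦 : Finset (Finset (Fin n))) (b : ℕ) (x : Fin n) :
    Finset (Finset (Fin n)) :=
  {Y ∈ powersetCard b univ | x ∉ Y ∧ insert x Y ∈ 𝒦}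

section counting

variable {n b : ℕ} {F 𝒦 : Finset (Finset (Fin n))}

lemma erase_mem_linkAt {x : Fin n} {X : Finset (Fin n)} (hX : X ∈ centered F 𝒦 b x)
    {y : Fin n} (hy : y ∈ X) : X.erase y ∈ linkAt 𝒦 b x := by
  rw [centered, mem_filter, mem_powersetCard] at hX
  rw [linkAt, mem_filter, mem_powersetCard]
  refine ⟨⟨subset_univ _, ?_⟩, ?_, hX.2.2.2 y hy⟩
  · rw [card_erase_of_mem hy, hX.1.2]; rfl
  · exact fun h => hX.2.1 (mem_of_mem_erase h)

lemma shadow_centered (x : Fin n) : (centered F 𝒦 b x).shadow ⊆ linkAt 𝒦 b x := by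
  intro Y hY
  obtain ⟨X, hX, y, hy, rfl⟩ := mem_shadow_iff.1 hY
  exact erase_mem_linkAt hX hy

lemma sized_centered (x : Fin n) :
    (centered F 𝒦 b x : Set (Finset (Fin n))).Sized (b + 1) := by
  intro X hX
  rw [mem_coe, centered, mem_filter, mem_powersetCard] at hX
  exact hX.1.2

lemma sum_linkAt_le (h𝒦 : ∀ X ∈ 𝒦, #X = b + 1) :
    ∑ x, #(linkAt 𝒦 b x) ≤ (b + 1) * #𝒦 := by
  calc ∑ x, #(linkAt 𝒦 b x) ≤ ∑ x : Fin n, #{X ∈ 𝒦 | x ∈ X} := by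
        apply sum_le_sum
        intro x _
        refine card_le_card_of_injOn (fun Y => insert x Y) ?_ ?_
        · intro Y hY
          rw [mem_coe, linkAt, mem_filter] at hY
          simp [hY.2.2]
        · intro Y hY Z hZ hYZ
          rw [mem_coe, linkAt, mem_filter] at hY hZ
          have := congrArg (fun U => U.erase x) hYZ
          simpa [erase_insert hY.2.1, erase_insert hZ.2.1] using this
    _ = ∑ X ∈ 𝒦, #X := by
        simp only [card_filter]
        rw [sum_comm]
        apply sum_congr rfl
        intro X _
        simp
    _ = (b + 1) * #𝒦 := by
        rw [sum_congr rfl h𝒦, sum_const, smul_eq_mul, mul_comm]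

lemma card_le_poor_add (hF : ∀ e ∈ F, #e = b + 2) :
    #F ≤ #{e ∈ F | ∃ x ∈ e, ∃ y ∈ e, x ≠ y ∧ e.erase x ∉ 𝒦 ∧ e.erase y ∉ 𝒦}
      + ∑ x, #(centered F 𝒦 b x) := by
  set P : Finset (Finset (Fin n)) :=
    {e ∈ F | ∃ x ∈ e, ∃ y ∈ e, x ≠ y ∧ e.erase x ∉ 𝒦 ∧ e.erase y ∉ 𝒦} with hP
  have hcov : F ⊆ P ∪ univ.biUnion (fun x => (centered F 𝒦 b x).image (fun X => insert x X)) := by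
    intro e he
    rw [mem_union]
    by_cases heP : e ∈ P
    · exact Or.inl heP
    right
    have hno : ∀ x ∈ e, ∀ y ∈ e, x ≠ y → e.erase x ∉ 𝒦 → e.erase y ∈ 𝒦 := by
      intro x hx y hy hxy h1
      by_contra h2
      exact heP (mem_filter.2 ⟨he, x, hx, y, hy, hxy, h1, h2⟩)
    obtain ⟨x, hx, hxall⟩ : ∃ x ∈ e, ∀ y ∈ e, x ≠ y → e.erase y ∈ 𝒦 := by
      by_cases hall : ∃ x ∈ e, e.erase x ∉ 𝒦
      · obtain ⟨x, hx, h⟩ := hall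
        exact ⟨x, hx, fun y hy hxy => hno x hx y hy hxy h⟩
      · push Not at hall
        obtain ⟨x, hx⟩ := card_pos.1 (by rw [hF e he]; omega : 0 < #e)
        exact ⟨x, hx, fun y hy _ => hall y hy⟩
    rw [mem_biUnion]
    refine ⟨x, mem_univ _, mem_image.2 ⟨e.erase x, ?_, insert_erase hx⟩⟩
    rw [centered, mem_filter, mem_powersetCard]
    refine ⟨⟨subset_univ _, ?_⟩, by simp, by rwa [insert_erase hx], ?_⟩
    · rw [card_erase_of_mem hx, hF e he]; rfl
    · intro y hy
      rw [mem_erase] at hy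
      have : insert x ((e.erase x).erase y) = e.erase y := by
        rw [erase_right_comm, insert_erase (mem_erase.2 ⟨hy.1.symm, hx⟩)]
      rw [this]
      exact hxall y hy.2 hy.1.symm
  calc #F ≤ _ := card_le_card hcov
    _ ≤ #P + #(univ.biUnion (fun x => (centered F 𝒦 b x).image (fun X => insert x X))) :=
        card_union_le _ _
    _ ≤ #P + ∑ x, #(centered F 𝒦 b x) := by
        gcongr
        refine card_biUnion_le.trans (sum_le_sum fun x _ => card_image_le)

/-- Double counting of pairs `(A, D)` with `A` a `j`-subset of `C D`. -/
lemma sum_choose_eq {ι : Type*} (𝒟 : Finset ι) (W : Finset (Fin n)) (C : ι → Finset (Fin n))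
    (hC : ∀ D ∈ 𝒟, C D ⊆ W) (j : ℕ) :
    ∑ D ∈ 𝒟, (#(C D)).choose j = ∑ A ∈ powersetCard j W, #{D ∈ 𝒟 | A ⊆ C D} := by
  simp only [card_filter]
  rw [sum_comm]
  apply sum_congr rfl
  intro D hD
  rw [← card_filter, ← card_powersetCard]
  congr 1
  ext A
  simp only [mem_powersetCard, mem_filter]
  constructor
  · rintro ⟨h1, h2⟩
    exact ⟨⟨h1.trans (hC D hD), h2⟩, h1⟩
  · rintro ⟨⟨-, h2⟩, h1⟩
    exact ⟨h1, h2⟩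

lemma sum_choose_le {ι : Type*} (𝒟 : Finset ι) (W : Finset (Fin n)) (C : ι → Finset (Fin n))
    (hC : ∀ D ∈ 𝒟, C D ⊆ W) (j l : ℕ)
    (h : ∀ A : Finset (Fin n), #A = j → #{D ∈ 𝒟 | A ⊆ C D} ≤ l) :
    ∑ D ∈ 𝒟, (#(C D)).choose j ≤ #W ^ j * l := by
  rw [sum_choose_eq 𝒟 W C hC j]
  refine (sum_le_card_nsmul _ _ l ?_).trans ?_
  · intro A hA
    exact h A (mem_powersetCard.1 hA).2
  · rw [card_powersetCard, smul_eq_mul]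
    exact Nat.mul_le_mul_right _ (Nat.choose_le_pow _ _)

lemma le_choose_of_lt {m τ : ℕ} (h : τ < m) : m - τ ≤ m.choose (τ + 1) := by
  obtain ⟨i, rfl⟩ : ∃ i, m = i + τ + 1 := ⟨m - τ - 1, by omega⟩
  induction i with
  | zero => simp
  | succ i ih =>
    have h1 := ih (by omega)
    rw [show i + 1 + τ + 1 = (i + τ + 1) + 1 by omega, Nat.choose_succ_succ']
    have h2 : 0 < (i + τ + 1).choose τ := Nat.choose_pos (by omega)
    omega

/-- Applied with `m` the number of centres of an `(r - 1)`-set: it has at most `τ` of them, and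
fewer if their number is not `τ`, up to an excess charged to the `(τ + 1)`-subsets of its centres. -/
lemma mult_bound (m τ : ℕ) :
    m + (if m ≠ τ then 1 else 0) ≤ τ + 2 * m.choose (τ + 1) := by
  rcases lt_trichotomy m τ with h | h | h
  · split_ifs <;> omega
  · simp [h]
  · have := le_choose_of_lt h
    split_ifs <;> omega

lemma choose_bound (m τ : ℕ) : m.choose τ ≤ 1 + (τ + 1) * m.choose (τ + 1) := by
  rcases lt_trichotomy m τ with h | h | h
  · rw [Nat.choose_eq_zero_of_lt h]; omega
  · simp [h]
  · have h1 := Nat.choose_succ_right_eq m τ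
    have h2 : m.choose τ * 1 ≤ m.choose τ * (m - τ) := Nat.mul_le_mul_left _ (by omega)
    rw [mul_comm (τ + 1)]
    omega

/-- The counting core, with `r = b + 2` and `σ = τ + 1`. Here `w` is the number of vertices of
large degree, `bad` counts the `(r - 1)`-sets that do not have exactly `τ` centres among these
vertices, and the last clause bounds the largest class of `(r - 1)`-sets with a common set `A` of
centres by comparing it with the shadows of all such classes. -/
lemma counting {τ k₀ κ π l₁ l₂ : ℕ} (hF : ∀ e ∈ F, #e = b + 2) (h𝒦 : ∀ X ∈ 𝒦, #X = b + 1)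
    (hκ : #𝒦 ≤ κ)
    (hπ : #{e ∈ F | ∃ x ∈ e, ∃ y ∈ e, x ≠ y ∧ e.erase x ∉ 𝒦 ∧ e.erase y ∉ 𝒦} ≤ π)
    (hl₁ : ∀ A : Finset (Fin n), #A = τ + 1 →
      #{X ∈ powersetCard (b + 1) univ | ∀ a ∈ A, a ∉ X ∧ insert a X ∈ F} ≤ l₁)
    (hl₂ : ∀ A : Finset (Fin n), #A = τ + 1 →
      #{Y ∈ powersetCard b univ | ∀ a ∈ A, a ∉ Y ∧ insert a Y ∈ 𝒦} ≤ l₂)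
    (hk₀ : b + 1 ≤ k₀) (hk₀n : k₀ ≤ n) (hτn : τ ≤ n) :
    ∃ w bad : ℕ, w * k₀.choose b ≤ (b + 1) * κ ∧
      #F + bad ≤ τ * n.choose (b + 1) + 2 * (w ^ (τ + 1) * l₁) + π + k₀ * κ ∧
      ∃ (A : Finset (Fin n)) (M : ℕ), #A = τ ∧ M ≤ n ∧
        M.choose (b + 1) ≤ #(commonLink F A) ∧
        (b + 1) * n.choose (b + 1) ≤
          (b + 1) * bad + (M + 1) * (n.choose b + (τ + 1) * (w ^ (τ + 1) * l₂)) := by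
  set W : Finset (Fin n) := {x | k₀.choose (b + 1) ≤ #(centered F 𝒦 b x)} with hW
  set 𝒟 : Finset (Finset (Fin n)) := powersetCard (b + 1) univ with h𝒟
  set 𝒴 : Finset (Finset (Fin n)) := powersetCard b univ with h𝒴
  set C : Finset (Fin n) → Finset (Fin n) := fun D => {x ∈ W | D ∈ centered F 𝒦 b x} with hC
  set L : Finset (Fin n) → Finset (Fin n) := fun Y => {x ∈ W | Y ∈ linkAt 𝒦 b x} with hL
  have h𝒟card : #𝒟 = n.choose (b + 1) := by simp [h𝒟]
  have h𝒴card : #𝒴 = n.choose b := by simp [h𝒴]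
  have hlink := sum_linkAt_le h𝒦
  have hlinkκ : ∑ x, #(linkAt 𝒦 b x) ≤ (b + 1) * κ := hlink.trans (Nat.mul_le_mul_left _ hκ)
  -- the number of large vertices
  have hWcard : #W * k₀.choose b ≤ (b + 1) * κ := by
    refine le_trans ?_ hlinkκ
    calc #W * k₀.choose b = ∑ _x ∈ W, k₀.choose b := by simp
      _ ≤ ∑ x ∈ W, #(linkAt 𝒦 b x) := by
        apply sum_le_sum
        intro x hx
        rw [hW, mem_filter] at hx
        have := kruskal_katona_lovasz_form (i := 1) (by omega) hk₀ hk₀n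
          (sized_centered (F := F) (𝒦 := 𝒦) x) hx.2
        simp only [Function.iterate_one, Nat.add_sub_cancel] at this
        exact this.trans (card_le_card (shadow_centered x))
      _ ≤ ∑ x, #(linkAt 𝒦 b x) := sum_le_sum_of_subset (subset_univ _)
  -- the contribution of the small vertices
  have hsmall : ∑ x ∈ Wᶜ, #(centered F 𝒦 b x) ≤ k₀ * κ := by
    have h1 : (b + 1) * ∑ x ∈ Wᶜ, #(centered F 𝒦 b x) ≤ (b + 1) * (k₀ * κ) := by
      calc (b + 1) * ∑ x ∈ Wᶜ, #(centered F 𝒦 b x)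
          = ∑ x ∈ Wᶜ, (b + 1) * #(centered F 𝒦 b x) := mul_sum _ _ _
        _ ≤ ∑ x ∈ Wᶜ, k₀ * #(linkAt 𝒦 b x) := by
          apply sum_le_sum
          intro x hx
          have hx' : #(centered F 𝒦 b x) < k₀.choose (b + 1) := by
            rw [mem_compl, hW, mem_filter] at hx
            simpa using hx
          exact (kk_ratio (sized_centered x) (by omega) hx').trans
            (Nat.mul_le_mul_left _ (card_le_card (shadow_centered x)))
        _ = k₀ * ∑ x ∈ Wᶜ, #(linkAt 𝒦 b x) := (mul_sum _ _ _).symm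
        _ ≤ k₀ * ((b + 1) * κ) := by
          gcongr
          exact (sum_le_sum_of_subset (subset_univ _)).trans hlinkκ
        _ = (b + 1) * (k₀ * κ) := by ring
    exact Nat.le_of_mul_le_mul_left h1 (by omega)
  have hlarge : ∑ x ∈ W, #(centered F 𝒦 b x) = ∑ D ∈ 𝒟, #(C D) := by
    simp only [hC, card_filter]
    rw [sum_comm]
    apply sum_congr rfl
    intro x _
    rw [← card_filter]
    congr 1
    ext D
    rw [mem_filter]
    constructor
    · intro h
      refine ⟨?_, h⟩
      rw [h𝒟]
      rw [centered, mem_filter] at h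
      exact h.1
    · exact fun h => h.2
  have hCW : ∀ D ∈ 𝒟, C D ⊆ W := fun D _ => filter_subset _ _
  have hLW : ∀ Y ∈ 𝒴, L Y ⊆ W := fun D _ => filter_subset _ _
  have hsumC : ∑ D ∈ 𝒟, (#(C D)).choose (τ + 1) ≤ #W ^ (τ + 1) * l₁ := by
    refine sum_choose_le 𝒟 W C hCW _ _ ?_
    intro A hA
    refine le_trans (card_le_card ?_) (hl₁ A hA)
    intro D hD
    rw [mem_filter] at hD ⊢
    refine ⟨hD.1, fun a ha => ?_⟩
    have := hD.2 ha
    simp only [hC, mem_filter, centered] at this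
    exact ⟨this.2.2.1, this.2.2.2.1⟩
  have hsumL : ∑ Y ∈ 𝒴, (#(L Y)).choose (τ + 1) ≤ #W ^ (τ + 1) * l₂ := by
    refine sum_choose_le 𝒴 W L hLW _ _ ?_
    intro A hA
    refine le_trans (card_le_card ?_) (hl₂ A hA)
    intro Y hY
    rw [mem_filter] at hY ⊢
    refine ⟨hY.1, fun a ha => ?_⟩
    have := hY.2 ha
    simp only [hL, mem_filter, linkAt] at this
    exact this.2.2
  set bad := #{D ∈ 𝒟 | #(C D) ≠ τ} with hbad
  refine ⟨#W, bad, hWcard, ?_, ?_⟩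
  · have h1 := card_le_poor_add (𝒦 := 𝒦) hF
    have h2 : ∑ x, #(centered F 𝒦 b x)
        = ∑ x ∈ W, #(centered F 𝒦 b x) + ∑ x ∈ Wᶜ, #(centered F 𝒦 b x) :=
      (sum_add_sum_compl _ _).symm
    have h3 : ∑ D ∈ 𝒟, #(C D) + bad ≤ τ * n.choose (b + 1) + 2 * (#W ^ (τ + 1) * l₁) := by
      rw [hbad, card_filter, ← sum_add_distrib]
      calc _ ≤ ∑ D ∈ 𝒟, (τ + 2 * (#(C D)).choose (τ + 1)) :=
            sum_le_sum fun D _ => mult_bound _ _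
        _ = τ * n.choose (b + 1) + 2 * ∑ D ∈ 𝒟, (#(C D)).choose (τ + 1) := by
            rw [sum_add_distrib, sum_const, h𝒟card, smul_eq_mul, mul_comm, mul_sum]
        _ ≤ _ := by gcongr
    omega
  · -- classes of sets with a common set of centres
    set G : Finset (Fin n) → Finset (Finset (Fin n)) := fun A => {D ∈ 𝒟 | C D = A} with hG
    set 𝒜 : Finset (Finset (Fin n)) := powersetCard τ univ with h𝒜
    have h𝒜ne : 𝒜.Nonempty := by
      rw [h𝒜]; exact powersetCard_nonempty.2 (by simpa using hτn)
    obtain ⟨A, hA, hmax⟩ := exists_max_image 𝒜 (fun A => #(G A)) h𝒜ne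
    have hGsized : ∀ B, (G B : Set (Finset (Fin n))).Sized (b + 1) := by
      intro B D hD
      simp only [hG, coe_filter, Set.mem_ofPred_eq, h𝒟, mem_powersetCard] at hD
      exact hD.1.2
    have hsumG : n.choose (b + 1) = bad + ∑ B ∈ 𝒜, #(G B) := by
      have h1 : ∑ B ∈ 𝒜, #(G B) = #{D ∈ 𝒟 | #(C D) = τ} := by
        have h2 := card_eq_sum_card_fiberwise (s := {D ∈ 𝒟 | #(C D) = τ}) (t := 𝒜) (f := C)
          (by
            intro D hD
            rw [mem_coe, mem_filter] at hD
            rw [h𝒜, mem_coe, mem_powersetCard]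
            exact ⟨subset_univ _, hD.2⟩)
        rw [h2]
        apply sum_congr rfl
        intro B hB
        congr 1
        ext D
        simp only [hG, mem_filter]
        rw [h𝒜, mem_powersetCard] at hB
        constructor
        · rintro ⟨h1, rfl⟩
          exact ⟨⟨h1, hB.2⟩, rfl⟩
        · rintro ⟨⟨h1, -⟩, h2⟩
          exact ⟨h1, h2⟩
      have h2 := card_filter_add_card_filter_not (s := 𝒟) (fun D => #(C D) = τ)
      rw [h1, hbad, ← h𝒟card, ← h2, add_comm]
    have hsumSh : ∑ B ∈ 𝒜, #((G B).shadow) ≤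
        n.choose b + (τ + 1) * (#W ^ (τ + 1) * l₂) := by
      have hsh : ∀ B ∈ 𝒜, #((G B).shadow) ≤ #{Y ∈ 𝒴 | B ⊆ L Y} := by
        intro B _
        apply card_le_card
        intro Y hY
        obtain ⟨D, hD, y, hy, rfl⟩ := mem_shadow_iff.1 hY
        simp only [hG, mem_filter] at hD
        rw [mem_filter]
        constructor
        · have := hD.1
          rw [h𝒟, mem_powersetCard] at this
          rw [h𝒴, mem_powersetCard, card_erase_of_mem hy, this.2]
          exact ⟨subset_univ _, rfl⟩
        · intro x hx
          rw [← hD.2] at hx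
          simp only [hC, mem_filter] at hx
          simp only [hL, mem_filter]
          exact ⟨hx.1, erase_mem_linkAt hx.2 hy⟩
      calc ∑ B ∈ 𝒜, #((G B).shadow) ≤ ∑ B ∈ 𝒜, #{Y ∈ 𝒴 | B ⊆ L Y} := sum_le_sum hsh
        _ = ∑ Y ∈ 𝒴, (#(L Y)).choose τ :=
            (sum_choose_eq 𝒴 univ L (fun _ _ => subset_univ _) τ).symm
        _ ≤ ∑ Y ∈ 𝒴, (1 + (τ + 1) * (#(L Y)).choose (τ + 1)) :=
            sum_le_sum fun Y _ => choose_bound _ _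
        _ = n.choose b + (τ + 1) * ∑ Y ∈ 𝒴, (#(L Y)).choose (τ + 1) := by
            rw [sum_add_distrib, sum_const, h𝒴card, smul_eq_mul, mul_one, mul_sum]
        _ ≤ _ := by gcongr
    have hGn : #(G A) < (n + 1).choose (b + 1) := by
      have h1 : #(G A) ≤ #𝒟 := card_le_card (filter_subset _ _)
      have h2 : 0 < n.choose b := Nat.choose_pos (by omega)
      rw [Nat.choose_succ_succ']
      omega
    have hex : ∃ M : ℕ, #(G A) < (M + 1).choose (b + 1) := ⟨n, hGn⟩
    obtain ⟨M, hM, hMmin⟩ : ∃ M : ℕ, #(G A) < (M + 1).choose (b + 1) ∧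
        ∀ i < M, ¬ #(G A) < (i + 1).choose (b + 1) :=
      ⟨Nat.find hex, Nat.find_spec hex, fun i hi => Nat.find_min hex hi⟩
    have hMn : M ≤ n := by
      by_contra! h
      exact hMmin n h hGn
    have hMle : M.choose (b + 1) ≤ #(G A) := by
      rcases Nat.eq_zero_or_pos M with h0 | h0
      · simp [h0]
      · have := hMmin (M - 1) (by omega)
        rw [Nat.sub_add_cancel h0] at this
        omega
    refine ⟨A, M, (mem_powersetCard.1 hA).2, hMn, hMle.trans (card_le_card ?_), ?_⟩
    · intro D hD
      simp only [hG, mem_filter] at hD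
      have hcen : ∀ a ∈ A, a ∉ D ∧ insert a D ∈ F := by
        intro a ha
        rw [← hD.2] at ha
        simp only [hC, mem_filter, centered] at ha
        exact ⟨ha.2.2.1, ha.2.2.2.1⟩
      rw [commonLink, mem_filter]
      refine ⟨mem_univ _, disjoint_right.2 fun a ha => (hcen a ha).1, fun a ha => (hcen a ha).2⟩
    · calc (b + 1) * n.choose (b + 1) = (b + 1) * bad + ∑ B ∈ 𝒜, (b + 1) * #(G B) := by
            rw [hsumG, mul_add, mul_sum]
        _ ≤ (b + 1) * bad + ∑ B ∈ 𝒜, (M + 1) * #((G B).shadow) := by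
            exact Nat.add_le_add_left (sum_le_sum fun B hB =>
              kk_ratio (hGsized B) (by omega) (lt_of_le_of_lt (hmax B hB) hM)) _
        _ = (b + 1) * bad + (M + 1) * ∑ B ∈ 𝒜, #((G B).shadow) := by rw [mul_sum]
        _ ≤ _ := by gcongr

end counting

/-! ### Asymptotics -/

/-- The numerical estimates in terms of `y = n ^ β`, for which `n = y ^ (b * (σ + 1) + 1)` and
`n ^ (r - 1 - β) = n ^ b * y ^ (b * (σ + 1))` with `b = r - 2`. -/
lemma asymp_core (b σ t : ℕ) (hb : 1 ≤ b) (hσ : 1 ≤ σ) :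
    ∃ Y : ℝ, ∀ (n : ℕ) (y : ℝ), Y ≤ y → (n : ℝ) = y ^ (b * (σ + 1) + 1) →
      ∃ k₀ : ℕ, b + 1 ≤ k₀ ∧ k₀ ≤ n ∧ σ ≤ n ∧
        ∀ w : ℕ, w * k₀.choose b ≤ (b + 1) * (t * n ^ b) →
          ((2 * (w ^ σ * (t * n ^ b)) + 2 * (t * t) * n ^ b + k₀ * (t * n ^ b) : ℕ) : ℝ)
              ≤ (n : ℝ) ^ b * y ^ (b * (σ + 1)) ∧
          (((n + 1) * (σ * (w ^ σ * (t * n ^ (b - 1)))) + (b + 1) * n.choose b : ℕ) : ℝ)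
              ≤ (b + 1) * ((n : ℝ) ^ b * y ^ (b * (σ + 1))) := by
  -- `c * y ^ b` bounds the number `w` of vertices of large degree
  set c : ℝ := (b + 1) * t * b.factorial * (8 * (t + 1)) ^ b with hc
  have hc0 : 0 ≤ c := by positivity
  refine ⟨8 * (t + 1) * (b + 1) + 8 * σ * t * c ^ σ + 8 * t ^ 2 + σ + 2, fun n y hy hn => ?_⟩
  have e1 : (0 : ℝ) ≤ 8 * (t + 1) * (b + 1) := by positivity
  have e2 : (0 : ℝ) ≤ 8 * σ * t * c ^ σ := by positivity
  have e3 : (0 : ℝ) ≤ 8 * (t : ℝ) ^ 2 := by positivity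
  have e4 : (0 : ℝ) ≤ σ := by positivity
  have hy2 : 2 ≤ y := by linarith
  have hy1 : 1 ≤ y := by linarith
  have hy0 : 0 < y := by linarith
  set q := b * (σ + 1) with hq
  have hq1 : 1 ≤ q := Nat.mul_pos (by omega) (by omega)
  set P : ℝ := y ^ q with hP
  have hyP : y ≤ P := le_self_pow₀ hy1 (by omega)
  have hP0 : 0 < P := by linarith
  have hnP : (n : ℝ) = P * y := by rw [hn, pow_succ]
  have hPn : P ≤ n := by rw [hnP]; exact le_mul_of_one_le_right hP0.le hy1
  have hn1 : (1 : ℝ) ≤ n := by linarith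
  have ht1 : (0 : ℝ) < t + 1 := by positivity
  set k₀ := ⌊P / (4 * (t + 1))⌋₊ with hk₀
  have hk₀le : (k₀ : ℝ) ≤ P / (4 * (t + 1)) := Nat.floor_le (by positivity)
  have hk₀gt : P / (4 * (t + 1)) < k₀ + 1 := Nat.lt_floor_add_one _
  have hPbig : 8 * (t + 1) * (b + 1) ≤ P := by linarith
  have hhalf : (b + 1 : ℝ) ≤ P / (8 * (t + 1)) := by
    rw [le_div_iff₀ (by positivity)]; linarith
  have hdbl : P / (4 * (t + 1)) = P / (8 * (t + 1)) + P / (8 * (t + 1)) := by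
    field_simp; norm_num
  have hb0 : (1 : ℝ) ≤ b := by exact_mod_cast hb
  have hk₀b : b + 1 ≤ k₀ := by
    have : ((b + 1 : ℕ) : ℝ) < (k₀ + 1 : ℕ) := by push_cast; linarith
    have := Nat.cast_lt.1 this
    omega
  have hk₀P : (k₀ : ℝ) * (4 * (t + 1)) ≤ P := by
    rwa [le_div_iff₀ (by positivity)] at hk₀le
  have hk₀0 : (0 : ℝ) ≤ k₀ := by positivity
  have ht0 : (0 : ℝ) ≤ t := by positivity
  refine ⟨k₀, hk₀b, ?_, ?_, ?_⟩
  · have : (k₀ : ℝ) ≤ n :=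
      hk₀le.trans ((div_le_self hP0.le (by linarith)).trans hPn)
    exact_mod_cast this
  · have : (σ : ℝ) ≤ n := by linarith
    exact_mod_cast this
  intro w hw
  -- the bound on `w`
  have hwb : (w : ℝ) ≤ c * y ^ b := by
    have hsub : P / (8 * (t + 1)) ≤ ((k₀ + 1 - b : ℕ) : ℝ) := by
      rw [Nat.cast_sub (by omega)]; push_cast; linarith
    have hch : (P / (8 * (t + 1))) ^ b / b.factorial ≤ k₀.choose b :=
      le_trans (by gcongr) (Nat.pow_le_choose (α := ℝ) b k₀)
    have hw' : (w : ℝ) * k₀.choose b ≤ (b + 1) * (t * n ^ b) := by exact_mod_cast hw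
    have h1 : (w : ℝ) * ((P / (8 * (t + 1))) ^ b / b.factorial) ≤ (b + 1) * (t * (P * y) ^ b) := by
      rw [← hnP]
      exact le_trans (by gcongr) hw'
    have hPb : 0 < P ^ b := by positivity
    have h2 : (w : ℝ) * ((P / (8 * (t + 1))) ^ b / b.factorial)
        = w * P ^ b / ((8 * (t + 1)) ^ b * b.factorial) := by
      rw [div_pow]; field_simp
    rw [h2, div_le_iff₀ (by positivity), mul_pow] at h1
    have h3 : (w : ℝ) * P ^ b ≤ (c * y ^ b) * P ^ b := by
      rw [hc]; linarith
    exact le_of_mul_le_mul_right h3 hPb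
  have hwσ : (w : ℝ) ^ σ * y ≤ c ^ σ * P := by
    have h1 : (w : ℝ) ^ σ ≤ c ^ σ * y ^ (b * σ) := by
      calc (w : ℝ) ^ σ ≤ (c * y ^ b) ^ σ := by gcongr
        _ = c ^ σ * y ^ (b * σ) := by rw [mul_pow, ← pow_mul]
    have h2 : y ≤ y ^ b := le_self_pow₀ hy1 (by omega)
    calc (w : ℝ) ^ σ * y ≤ (c ^ σ * y ^ (b * σ)) * y ^ b := by gcongr
      _ = c ^ σ * P := by rw [hP, hq, mul_assoc, ← pow_add]; ring_nf
  have hσ1 : (1 : ℝ) ≤ σ := by exact_mod_cast hσ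
  have hkey : 8 * σ * t * (w : ℝ) ^ σ ≤ P := by
    have h1 : (8 * σ * t * (w : ℝ) ^ σ) * y ≤ P * y := by
      calc (8 * σ * t * (w : ℝ) ^ σ) * y = 8 * σ * t * ((w : ℝ) ^ σ * y) := by ring
        _ ≤ 8 * σ * t * (c ^ σ * P) := by gcongr
        _ = P * (8 * σ * t * c ^ σ) := by ring
        _ ≤ P * y := by gcongr; linarith
    exact le_of_mul_le_mul_right h1 hy0
  have hkey' : 8 * (t * (w : ℝ) ^ σ) ≤ P := by
    have h0 : 0 ≤ t * (w : ℝ) ^ σ := by positivity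
    have h1 := mul_le_mul_of_nonneg_right hσ1 h0
    linarith
  have hnb : (0 : ℝ) < (n : ℝ) ^ b := by positivity
  constructor
  · push_cast
    have h3 : 2 * (t * (w : ℝ) ^ σ) + 2 * (t * t) + k₀ * t ≤ P := by linarith
    calc _ = (n : ℝ) ^ b * (2 * (t * (w : ℝ) ^ σ) + 2 * (t * t) + k₀ * t) := by ring
      _ ≤ _ := by gcongr
  · push_cast
    have h4 : (n.choose b : ℝ) ≤ (n : ℝ) ^ b := by exact_mod_cast Nat.choose_le_pow n b
    have h5 : ((n : ℝ) + 1) * n ^ (b - 1) ≤ 2 * n ^ b := by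
      obtain ⟨d, rfl⟩ : ∃ d, b = d + 1 := ⟨b - 1, by omega⟩
      rw [Nat.add_sub_cancel, pow_succ]
      have : (0 : ℝ) < (n : ℝ) ^ d := by positivity
      have h9 : (n : ℝ) ^ d * 1 ≤ n ^ d * n := by gcongr
      linarith
    have h6 : 2 * (σ * t * (w : ℝ) ^ σ) + (b + 1) ≤ (b + 1) * P := by
      have h7 : (b + 1 : ℝ) * 2 ≤ (b + 1) * P := by gcongr; linarith
      have h8 : 1 * P ≤ b * P := by gcongr
      linarith
    calc _ = (σ * t * (w : ℝ) ^ σ) * (((n : ℝ) + 1) * n ^ (b - 1)) + (b + 1) * n.choose b := by ring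
      _ ≤ (σ * t * (w : ℝ) ^ σ) * (2 * n ^ b) + (b + 1) * n ^ b := by gcongr
      _ = (n : ℝ) ^ b * (2 * (σ * t * (w : ℝ) ^ σ) + (b + 1)) := by ring
      _ ≤ (n : ℝ) ^ b * ((b + 1) * P) := by gcongr
      _ = _ := by ring

lemma asymp (b σ t : ℕ) (hb : 1 ≤ b) (hσ : 1 ≤ σ) :
    ∃ N : ℕ, ∀ n : ℕ, N ≤ n →
      ∃ k₀ : ℕ, b + 1 ≤ k₀ ∧ k₀ ≤ n ∧ σ ≤ n ∧
        ∀ w : ℕ, w * k₀.choose b ≤ (b + 1) * (t * n ^ b) →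
          ((2 * (w ^ σ * (t * n ^ b)) + 2 * (t * t) * n ^ b + k₀ * (t * n ^ b) : ℕ) : ℝ)
              ≤ (n : ℝ) ^ ((b : ℝ) + 1 - betaExp (b + 2) σ) ∧
          (((n + 1) * (σ * (w ^ σ * (t * n ^ (b - 1)))) + (b + 1) * n.choose b : ℕ) : ℝ)
              ≤ (b + 1) * (n : ℝ) ^ ((b : ℝ) + 1 - betaExp (b + 2) σ) := by
  obtain ⟨Y, hY⟩ := asymp_core b σ t hb hσ
  have hβ : betaExp (b + 2) σ * ((b * (σ + 1) + 1 : ℕ) : ℝ) = 1 := by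
    have : (0 : ℝ) < (b : ℝ) * (σ + 1) + 1 := by positivity
    rw [betaExp]
    push_cast
    rw [add_sub_cancel_right, one_div, inv_mul_cancel₀ this.ne']
  have hβ0 : 0 < betaExp (b + 2) σ := by
    have : (0 : ℝ) < (b * (σ + 1) + 1 : ℕ) := by positivity
    by_contra! h
    nlinarith
  have htend := (tendsto_rpow_atTop hβ0).comp (tendsto_natCast_atTop_atTop (R := ℝ))
  obtain ⟨N, hN⟩ := Filter.eventually_atTop.1
    ((htend.eventually_ge_atTop Y).and (Filter.eventually_ge_atTop 1))
  refine ⟨N, fun n hn => ?_⟩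
  obtain ⟨h1, h2⟩ := hN n hn
  have hn0 : (0 : ℝ) < n := by exact_mod_cast h2
  have hny : (n : ℝ) = ((n : ℝ) ^ betaExp (b + 2) σ) ^ (b * (σ + 1) + 1) := by
    rw [← Real.rpow_mul_natCast hn0.le, hβ, Real.rpow_one]
  have hZ : (n : ℝ) ^ ((b : ℝ) + 1 - betaExp (b + 2) σ)
      = (n : ℝ) ^ b * ((n : ℝ) ^ betaExp (b + 2) σ) ^ (b * (σ + 1)) := by
    rw [← Real.rpow_mul_natCast hn0.le, ← Real.rpow_natCast, ← Real.rpow_add hn0]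
    congr 1
    push_cast at hβ ⊢
    linarith
  rw [hZ]
  exact hY n _ h1 hny

/-! ### The theorem -/

/-- The copy of `H` inside the tree is pulled into `ℕ`, together with a minimum cross-cut of `H`
restricted to the vertices of `H`. -/
lemma exists_treeData {α : Type*} [DecidableEq α] {r σ : ℕ} {H : Finset (Finset α)}
    (hemb : ∃ T : Finset (Finset ℕ), IsRTree r T ∧ Reducible 2 T ∧ ContainsCopy T H)
    (hcc : ∃ S : Finset α, IsCrossCut H S) (hσ : crossCutNum H = σ) :
    ∃ (t : ℕ) (T H₀ : Finset (Finset ℕ)) (S : Finset ℕ) (u v : Finset ℕ → ℕ),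
      TreeData r t T H₀ S u v ∧ #S ≤ σ ∧
      ∀ (n : ℕ) (F : Finset (Finset (Fin n))), ContainsCopy F H₀ → ContainsCopy F H := by
  obtain ⟨T, hT, hred, φ, hφ, hφT⟩ := hemb
  obtain ⟨S, hS, hScard⟩ : ∃ S : Finset α, IsCrossCut H S ∧ #S = σ := by
    have hne : {k | ∃ S : Finset α, IsCrossCut H S ∧ #S = k}.Nonempty := by
      obtain ⟨S, hS⟩ := hcc
      exact ⟨#S, S, hS, rfl⟩
    have := Nat.sInf_mem hne
    rw [← hσ]
    exact this
  have hsub : ∀ e ∈ H, e ⊆ H.sup id := fun e he => le_sup (f := id) he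
  set S₀ : Finset ℕ := (S ∩ H.sup id).image φ with hS₀
  -- privacy of degree-one vertices
  have hpriv : ∀ x, hdeg T x = 1 → ∀ e ∈ T, ∀ e' ∈ T, x ∈ e → x ∈ e' → e = e' := by
    intro x hx e he e' he' h1 h2
    rw [hdeg] at hx
    exact card_le_one.1 hx.le e (mem_filter.2 ⟨he, h1⟩) e' (mem_filter.2 ⟨he', h2⟩)
  have huv : ∀ e, ∃ x y, e ∈ T → x ∈ e ∧ y ∈ e ∧ x ≠ y ∧ hdeg T x = 1 ∧ hdeg T y = 1 ∧
      (#(e ∩ S₀) ≤ 1 → x ∉ S₀) := by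
    intro e
    by_cases he : e ∈ T
    swap
    · exact ⟨0, 0, fun h => absurd h he⟩
    obtain ⟨x, hx, y, hy, hxy⟩ := one_lt_card.1 (hred e he)
    rw [mem_filter] at hx hy
    by_cases hxS : x ∈ S₀
    · refine ⟨y, x, fun _ => ⟨hy.1, hx.1, hxy.symm, hy.2, hx.2, fun h1 hyS => hxy ?_⟩⟩
      exact card_le_one.1 h1 x (mem_inter.2 ⟨hx.1, hxS⟩) y (mem_inter.2 ⟨hy.1, hyS⟩)
    · exact ⟨x, y, fun _ => ⟨hx.1, hy.1, hxy, hx.2, hy.2, fun _ => hxS⟩⟩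
  choose u v huv using huv
  refine ⟨#(T.sup id), T, H.image (fun e => e.image φ), S₀, u, v, ?_, ?_, ?_⟩
  · refine ⟨hT, ?_, le_rfl, ?_, fun e he => (huv e he).1, fun e he => (huv e he).2.1,
      fun e he => (huv e he).2.2.1, ?_, ?_, fun e he => (huv e he).2.2.2.2.2⟩
    · intro e he
      obtain ⟨e₀, he₀, rfl⟩ := mem_image.1 he
      exact hφT e₀ he₀
    · intro e he
      obtain ⟨e₀, he₀, rfl⟩ := mem_image.1 he
      have h1 : e₀.image φ ∩ S₀ = (e₀ ∩ S).image φ := by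
        ext z
        simp only [hS₀, mem_inter, mem_image]
        constructor
        · rintro ⟨⟨a, ha, rfl⟩, a', ⟨ha'S, ha'⟩, heq⟩
          have : a' = a := hφ (mem_coe.2 ha') (mem_coe.2 (hsub e₀ he₀ ha)) heq
          subst this
          exact ⟨a', ⟨ha, ha'S⟩, rfl⟩
        · rintro ⟨a, ⟨ha, haS⟩, rfl⟩
          exact ⟨⟨a, ha, rfl⟩, a, ⟨haS, hsub e₀ he₀ ha⟩, rfl⟩
      rw [h1, card_image_of_injOn]
      · exact hS e₀ he₀
      · intro a ha a' ha' h
        rw [mem_coe, mem_inter] at ha ha'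
        exact hφ (mem_coe.2 (hsub e₀ he₀ ha.1)) (mem_coe.2 (hsub e₀ he₀ ha'.1)) h
    · intro e he e' he' h
      exact hpriv _ (huv e he).2.2.2.1 e he e' he' (huv e he).1 h
    · intro e he e' he' h
      exact hpriv _ (huv e he).2.2.2.2.1 e he e' he' (huv e he).2.1 h
  · rw [← hScard]
    exact card_image_le.trans (card_le_card inter_subset_left)
  · rintro n F ⟨f, hf, hfF⟩
    refine ⟨f ∘ φ, ?_, ?_⟩
    · have hmaps : Set.MapsTo φ ↑(H.sup id) 
          (((H.image (fun e => e.image φ)).sup id : Finset ℕ) : Set ℕ) := by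
        intro a ha
        rw [mem_coe, mem_sup] at ha ⊢
        obtain ⟨e, he, hae⟩ := ha
        exact ⟨e.image φ, mem_image_of_mem _ he, mem_image_of_mem φ hae⟩
      exact hf.comp hφ hmaps
    · intro e he
      rw [← image_image]
      exact hfF _ (mem_image_of_mem _ he)

lemma choose_le_choose_add {M n : ℕ} (h : M ≤ n) (b : ℕ) :
    n.choose (b + 1) ≤ M.choose (b + 1) + (n - M) * n.choose b := by
  induction n, h using Nat.le_induction with
  | base => simp
  | succ n hn ih =>
    rw [Nat.choose_succ_succ', Nat.succ_sub hn, Nat.succ_mul]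
    have h1 : n.choose b ≤ (n + 1).choose b := Nat.choose_le_choose b (by omega)
    have h2 := Nat.mul_le_mul_left (n - M) h1
    omega

/-- Members of the common link of `A` produce edges meeting `A` in exactly one vertex. -/
lemma card_mul_commonLink_le {n : ℕ} (F : Finset (Finset (Fin n))) (A : Finset (Fin n)) :
    #A * #(commonLink F A) ≤ #{e ∈ F | #(e ∩ A) = 1} := by
  rw [← card_product]
  have hinter : ∀ a ∈ A, ∀ D ∈ commonLink F A, insert a D ∩ A = {a} := by
    intro a ha D hD
    rw [commonLink, mem_filter] at hD
    rw [insert_inter_of_mem ha, disjoint_iff_inter_eq_empty.1 hD.2.1, insert_empty_eq]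
  refine card_le_card_of_injOn (fun p => insert p.1 p.2) ?_ ?_
  · rintro ⟨a, D⟩ hp
    rw [mem_coe, mem_product] at hp
    rw [mem_coe, mem_filter]
    refine ⟨?_, by rw [hinter a hp.1 D hp.2, card_singleton]⟩
    have := hp.2
    rw [commonLink, mem_filter] at this
    exact this.2.2 a hp.1
  · rintro ⟨a, D⟩ hp ⟨a', D'⟩ hp' heq
    rw [mem_coe, mem_product] at hp hp'
    simp only at heq hp hp'
    have haa : a = a' := by
      have h := hinter a hp.1 D hp.2
      rw [heq, hinter a' hp'.1 D' hp'.2] at h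
      exact (singleton_injective h).symm
    subst haa
    have hD := hp.2
    have hD' := hp'.2
    rw [commonLink, mem_filter] at hD hD'
    have h1 : a ∉ D := disjoint_right.1 hD.2.1 hp.1
    have h2 : a ∉ D' := disjoint_right.1 hD'.2.1 hp.1
    rw [Prod.mk.injEq]
    refine ⟨rfl, ?_⟩
    rw [← erase_insert h1, heq, erase_insert h2]

/-- The final arithmetic: `b = r - 2`, `Z = n ^ (r - 1 - β)`, `e₁` and `e₂` are the error terms
of the counting argument. -/
lemma link_arith {n M b bad f τ e₁ e₂ L : ℕ} {K Z : ℝ} (hMn : M ≤ n) (hbn : b ≤ n)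
    (h1 : f + bad ≤ τ * n.choose (b + 1) + e₁) (hL : M.choose (b + 1) ≤ L)
    (h2 : (b + 1) * n.choose (b + 1) ≤ (b + 1) * bad + (M + 1) * (n.choose b + e₂))
    (hf : (τ : ℝ) * n.choose (b + 1) - K * Z ≤ f) (he₁ : (e₁ : ℝ) ≤ Z)
    (he₂ : (((n + 1) * e₂ + (b + 1) * n.choose b : ℕ) : ℝ) ≤ (b + 1) * Z) :
    (n.choose (b + 1) : ℝ) - (b + 1) * (K + 2) * Z ≤ L := by
  have h3 := choose_le_choose_add hMn b
  have h4 := Nat.choose_succ_right_eq n b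
  have h3' : (n.choose (b + 1) : ℝ) ≤ M.choose (b + 1) + (n - M) * n.choose b := by
    rw [← Nat.cast_sub hMn]; exact_mod_cast h3
  have h4' : (n.choose (b + 1) : ℝ) * (b + 1) = n.choose b * (n - b) := by
    rw [← Nat.cast_sub hbn]; exact_mod_cast h4
  have h1' : (f : ℝ) + bad ≤ τ * n.choose (b + 1) + e₁ := by exact_mod_cast h1
  have h2' : ((b : ℝ) + 1) * n.choose (b + 1)
      ≤ (b + 1) * bad + (M + 1) * (n.choose b + e₂) := by exact_mod_cast h2
  have hL' : (M.choose (b + 1) : ℝ) ≤ L := by exact_mod_cast hL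
  have hM' : (M : ℝ) ≤ n := by exact_mod_cast hMn
  push_cast at he₂
  have hbad : (bad : ℝ) ≤ (K + 1) * Z := by linarith
  have h5 : ((b : ℝ) + 1) * bad ≤ (b + 1) * ((K + 1) * Z) := by gcongr
  have h6 : ((M : ℝ) + 1) * e₂ ≤ (n + 1) * e₂ := by gcongr
  have h7 : (n - M : ℝ) * n.choose b ≤ (b + 1) * bad + (b + 1) * n.choose b + (n + 1) * e₂ := by
    linarith
  linarith

/-- Structural stability. If an `H`-free family `F` of `r`-subsets of `[n]` has at least
`(σ-1)·C(n,r-1) - K·n^(r-1-β)` members, then there is a `(σ-1)`-set `A` whose common link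
is almost complete, and almost all members of `F` meet `A` in exactly one vertex. -/
theorem stability {α : Type*} [DecidableEq α]
    (r s σ : ℕ) (hr : 4 ≤ r)
    (H : Finset (Finset α)) (hH : ∀ E ∈ H, E.card = r) (hs : (H.sup id).card = s)
    (hemb : ∃ T : Finset (Finset ℕ), IsRTree r T ∧ Reducible 2 T ∧ ContainsCopy T H)
    (hcc : ∃ S : Finset α, IsCrossCut H S)
    (hσ : crossCutNum H = σ) (hσ2 : 2 ≤ σ) :
    ∃ N : ℕ, ∀ n : ℕ, N ≤ n → ∀ K : ℝ, 0 ≤ K →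
      ∀ F : Finset (Finset (Fin n)), (∀ E ∈ F, E.card = r) → ¬ ContainsCopy F H →
      ((σ : ℝ) - 1) * (Nat.choose n (r - 1)) - K * (n : ℝ) ^ ((r : ℝ) - 1 - betaExp r σ)
          ≤ (F.card : ℝ) →
      ∃ A : Finset (Fin n), A.card = σ - 1 ∧
        ((Nat.choose n (r - 1) : ℝ) -
            ((r : ℝ) - 1) * (K + 2 * (s : ℝ) ^ 2) * (n : ℝ) ^ ((r : ℝ) - 1 - betaExp r σ)
          ≤ ((commonLink F A).card : ℝ)) ∧
        (((F.filter (fun E => (E ∩ A).card ≠ 1)).card : ℝ) ≤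
          (((σ : ℝ) - 1) * ((r : ℝ) - 1) * (K + 2 * (s : ℝ) ^ 2) + 2 * (s : ℝ) ^ 2) *
            (n : ℝ) ^ ((r : ℝ) - 1 - betaExp r σ)) := by
  have hs1 : 1 ≤ s := by
    rw [← hs]
    have hne : H.Nonempty := by
      rw [nonempty_iff_ne_empty]
      rintro rfl
      have h0 : crossCutNum (∅ : Finset (Finset α)) ≤ 0 :=
        Nat.sInf_le ⟨∅, by simp [IsCrossCut], rfl⟩
      omega
    obtain ⟨e, he⟩ := hne
    have h1 : #e ≤ #(H.sup id) := card_le_card (le_sup (f := id) he)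
    rw [hH e he] at h1
    omega
  have hs2 : (1 : ℝ) ≤ (s : ℝ) ^ 2 := one_le_pow₀ (by exact_mod_cast hs1)
  obtain ⟨t, T, H₀, S, u, v, D, hSσ, hcopy⟩ := exists_treeData hemb hcc hσ
  obtain ⟨b, rfl⟩ : ∃ b, r = b + 2 := ⟨r - 2, by omega⟩
  obtain ⟨τ, rfl⟩ : ∃ τ, σ = τ + 1 := ⟨σ - 1, by omega⟩
  obtain ⟨N, hN⟩ := asymp b (τ + 1) t (by omega) (by omega)
  refine ⟨N, fun n hn K hK F hFr hF hcard => ?_⟩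
  have hF₀ : ¬ ContainsCopy F H₀ := fun h => hF (hcopy n F h)
  obtain ⟨k₀, hk₀, hk₀n, hσn, hw⟩ := hN n hn
  have hexp : ((b + 2 : ℕ) : ℝ) - 1 - betaExp (b + 2) (τ + 1)
      = (b : ℝ) + 1 - betaExp (b + 2) (τ + 1) := by push_cast; ring
  rw [hexp] at hcard ⊢
  set Z : ℝ := (n : ℝ) ^ ((b : ℝ) + 1 - betaExp (b + 2) (τ + 1)) with hZ
  have hZ0 : 0 ≤ Z := by positivity
  simp only [show b + 2 - 1 = b + 1 from rfl, Nat.add_sub_cancel] at hcard ⊢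
  push_cast at hcard ⊢
  rw [add_sub_cancel_right] at hcard
  obtain ⟨w, bad, hwk, hcount, A, M, hA, hMn, hML, hshadow⟩ :=
    counting (τ := τ) (k₀ := k₀) (l₁ := t * n ^ b) (l₂ := t * n ^ (b - 1))
      hFr (𝒦 := richSets (b + 2) t F)
      (fun X hX => by
        rw [richSets, mem_filter, mem_powersetCard] at hX
        exact hX.1.2)
      (D.card_rich_le hr hF₀) (D.card_poor_le hr hFr hF₀)
      (fun A hA => D.card_link_le hr hF₀ (by omega))
      (fun A hA => D.card_rich_link_le hr hF₀ (by omega)) hk₀ hk₀n (by omega)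
  obtain ⟨he₁, he₂⟩ := hw w hwk
  simp only [show b + 2 - 2 = b from rfl] at hcount
  have hlink := link_arith (K := K) (Z := Z) hMn (by omega)
    (by simpa only [add_assoc] using hcount) hML hshadow hcard
    (by simpa only [add_assoc] using he₁) he₂
  have hlink' : (n.choose (b + 1) : ℝ) - (b + 1) * (K + 2 * (s : ℝ) ^ 2) * Z
      ≤ #(commonLink F A) := by
    refine le_trans ?_ hlink
    gcongr
    linarith
  refine ⟨A, hA, ?_, ?_⟩
  · refine le_trans (le_of_eq ?_) hlink'
    ring
  · have h1 := card_mul_commonLink_le F A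
    rw [hA] at h1
    have h2 := card_filter_add_card_filter_not (s := F) (fun E => #(E ∩ A) = 1)
    have h3 : (#F : ℝ) ≤ τ * n.choose (b + 1) + Z := by
      have h4 : #F ≤ τ * n.choose (b + 1) + (2 * (w ^ (τ + 1) * (t * n ^ b))
          + 2 * (t * t) * n ^ b + k₀ * (t * n ^ b)) := by
        omega
      have h5 : (#F : ℝ) ≤ τ * n.choose (b + 1) + ((2 * (w ^ (τ + 1) * (t * n ^ b))
          + 2 * (t * t) * n ^ b + k₀ * (t * n ^ b) : ℕ) : ℝ) := by exact_mod_cast h4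
      linarith
    have h1' : (τ : ℝ) * #(commonLink F A) ≤ #{E ∈ F | #(E ∩ A) = 1} := by exact_mod_cast h1
    have h2' : (#{E ∈ F | #(E ∩ A) = 1} : ℝ) + #{E ∈ F | #(E ∩ A) ≠ 1} = #F := by
      exact_mod_cast h2
    have h6 := mul_le_mul_of_nonneg_left hlink' (Nat.cast_nonneg (α := ℝ) τ)
    have h7 : Z ≤ 2 * (s : ℝ) ^ 2 * Z := le_mul_of_one_le_left hZ0 (by linarith)
    have h8 : (τ + 1 - 1 : ℝ) * (b + 2 - 1) * (K + 2 * (s : ℝ) ^ 2)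
        = τ * ((b + 1) * (K + 2 * (s : ℝ) ^ 2)) := by ring
    rw [h8]
    linarith

end
end

section
/- Let H be a 2-reducible r-tree, where r ≥ 4, with cross-cut number σ = σ(H). Then there is a constant C > 0 (depending only on r and the number of vertices of H) such that ex(n,H) ≤ (σ−1)·binom(n,r−1) + C·n^{r−2} for all n. -/
/-!
Let `F` be an `H`-free `r`-graph on `n` vertices, `S₀` a minimum cross-cut of `H`, `σ = |S₀|`, and
`w` the number of vertices of `H`.

Repeatedly deleting all edges through an `(r - 1)`-set of positive degree at most `σ - 1` loses at
most `(σ - 1) * n.choose (r - 1)` edges and leaves a family `G` in which every set of the shadow `∂G`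
has degree at least `σ` (`exists_dense_subfamily`). The same deletion with threshold `w` shows
`|G| ≤ w |∂G|` (`card_le_mul_card_shadow`), since an `r`-tree embeds greedily as soon as every vertex
of every edge can be replaced by a fresh one. It remains to prove `|∂G| = O(n ^ (r - 2))`.

List the sets of `∂G` as ordered `(r - 1)`-tuples `d`, and let `T d` be the set of vertices completing
`d` to an edge of `G`, so `|T d| ≥ σ`. Fix a coordinate `p`. If in some nonempty subfamily every
coordinate can be freely replaced, and coordinate `p` can be replaced together with the completing
vertex, then `H` embeds: by 2-reducibility every edge has two vertices in no other edge, and these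
are put in the two special positions (`containsCopy_of_pair_replaceable`). Otherwise peeling off the
tuples that fail shows that, up to `O(n ^ (r - 2))` tuples, `T d` lies in a set of at most `w`
vertices determined by the coordinates other than `p` (`exists_confined_subfamily`).

Once `T d` is confined in this way for every `p`, choose a `σ`-subset `S d` of each `T d`. Along
every line of tuples there are at most `2 ^ w` choices of `S d`, so if more than `O(n ^ (r - 2))`
tuples were left, some nonempty subfamily would have a constant value `S` of `S d` and freely
replaceable coordinates. Then `H` embeds with `S₀` mapped onto `S` and the remaining `r - 1` vertices
of each edge mapped along tuples of the subfamily (`card_le_of_confined`), a contradiction.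
-/

open Finset
open scoped Classical

noncomputable section

variable {α β : Type*}

/-! ### Peeling -/

/-- Peeling. If every nonempty subfamily of `X` has an element that is bad for some reason, then
each element can be given a single reason `ρ d` so that every nonempty subfamily `Z` of `X` contains
an element bad in `Z` for its own reason `ρ d`. The elements are removed from `X` one by one and
`ρ d` records the reason valid when `d` was removed; badness survives passing to subfamilies. -/
theorem exists_peeling {β ι : Type*} [DecidableEq β] [Nonempty ι]
    (bad : Finset β → ι → β → Prop)
    (anti : ∀ Y Z i d, Z ⊆ Y → bad Y i d → bad Z i d) (X : Finset β)
    (h : ∀ Y ⊆ X, Y.Nonempty → ∃ d ∈ Y, ∃ i, bad Y i d) :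
    ∃ ρ : β → ι, ∀ Z ⊆ X, Z.Nonempty → ∃ d ∈ Z, bad Z (ρ d) d := by
  induction X using Finset.strongInduction with
  | H X ih =>
    rcases X.eq_empty_or_nonempty with rfl | hX
    · refine ⟨fun _ => Classical.arbitrary ι, fun Z hZ hne => ?_⟩
      rw [Finset.subset_empty.1 hZ] at hne
      simp at hne
    · obtain ⟨d, hd, i, hi⟩ := h X subset_rfl hX
      obtain ⟨ρ, hρ⟩ := ih (X.erase d) (Finset.erase_ssubset hd)
        (fun Y hY hne => h Y (hY.trans (Finset.erase_subset _ _)) hne)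
      refine ⟨Function.update ρ d i, fun Z hZ hne => ?_⟩
      by_cases hdZ : d ∈ Z
      · exact ⟨d, hdZ, by simpa using anti X Z i d hZ hi⟩
      · obtain ⟨e, he, hbad⟩ := hρ Z (Finset.subset_erase.2 ⟨hZ, hdZ⟩) hne
        have hed : e ≠ d := fun h => hdZ (h ▸ he)
        exact ⟨e, he, by rwa [Function.update_of_ne hed]⟩

/-! ### Greedy embedding of trees -/

/-- Greedy embedding of the first `t` edges of a tree order. The predicate `Φ (E i) g` says that
`g` is an admissible placement of the edge `E i`, the vertices of `S₀` are pinned to their images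
under `s₀`, and `hstep` extends an admissible placement of `E j` to one of `E i` that agrees with it
on `E i ∩ E j` and avoids a prescribed set of `w` vertices elsewhere outside `S₀`. By the tree
property, the part of a new edge already embedded lies in its parent or in `S₀`. -/
theorem exists_partial_embedding {α V : Type*} [DecidableEq α] [DecidableEq V] {m w : ℕ}
    (E : Fin m → Finset α) (hE : IsTreeOrder E) (S₀ : Finset α) (s₀ : α → V)
    (hs₀ : Set.InjOn s₀ S₀) (Φ : Finset α → (α → V) → Prop)
    (hcongr : ∀ i f g, (∀ x ∈ E i, f x = g x) → Φ (E i) f → Φ (E i) g)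
    (hinj : ∀ i g, Φ (E i) g → Set.InjOn g (E i))
    (hfix : ∀ i g, Φ (E i) g → ∀ x ∈ E i, x ∈ S₀ → g x = s₀ x)
    (hstart : ∀ i (W : Finset V), W.card ≤ w →
      ∃ g, Φ (E i) g ∧ ∀ x ∈ E i, x ∉ S₀ → g x ∉ W)
    (hstep : ∀ i j g (W : Finset V), E i ≠ E j → Φ (E j) g → W.card ≤ w →
      ∃ g', Φ (E i) g' ∧ (∀ x ∈ E i, x ∈ E j → g' x = g x) ∧
        ∀ x ∈ E i, x ∉ E j → x ∉ S₀ → g' x ∉ W)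
    (hw : (Finset.univ.sup E ∪ S₀).card ≤ w) (t : ℕ) (ht : t ≤ m) :
    ∃ f : α → V, Set.InjOn f (((Finset.univ.filter fun i : Fin m => i.1 < t).sup E ∪ S₀ :
        Finset α) : Set α) ∧ (∀ x ∈ S₀, f x = s₀ x) ∧ ∀ i : Fin m, i.1 < t → Φ (E i) f := by
  induction t with
  | zero => exact ⟨s₀, by simpa using hs₀, by simp, by simp⟩
  | succ t ih =>
    obtain ⟨f, hf, hfS, hfΦ⟩ := ih (by omega)
    let k : Fin m := ⟨t, by omega⟩
    have hIio : (Finset.univ.filter fun i : Fin m => i.1 < t) = Finset.Iio k := by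
      ext i; simp [k, Fin.lt_def]
    have hsucc : (Finset.univ.filter fun i : Fin m => i.1 < t + 1) =
        insert k (Finset.univ.filter fun i : Fin m => i.1 < t) := by
      ext i; simp [k, Fin.ext_iff]; omega
    set U := (Finset.univ.filter fun i : Fin m => i.1 < t).sup E with hU
    have hsub : ∀ i : Fin m, i.1 < t → E i ⊆ U := fun i hi =>
      Finset.le_sup (f := E) (by simp [hi])
    rw [hsucc, Finset.sup_insert]
    by_cases hrep : ∃ i : Fin m, i.1 < t ∧ E i = E k
    · obtain ⟨i, hi, hik⟩ := hrep
      have hkU : E k ⊆ U := hik ▸ hsub i hi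
      refine ⟨f, ?_, hfS, fun j hj => ?_⟩
      · rw [← hU, sup_eq_right.2 hkU]; exact hf
      · rcases Nat.lt_succ_iff_lt_or_eq.1 hj with h | h
        · exact hfΦ j h
        · have : j = k := Fin.ext h
          rw [this, ← hik]; exact hfΦ i hi
    · have hW : ((U ∪ S₀).image f).card ≤ w :=
        Finset.card_image_le.trans ((Finset.card_le_card
          (Finset.union_subset_union_left (Finset.sup_mono (Finset.filter_subset _ _)))).trans hw)
      obtain ⟨g, hgΦ, hgU, hgW⟩ : ∃ g, Φ (E k) g ∧ (∀ x ∈ E k, x ∈ U → g x = f x) ∧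
          ∀ x ∈ E k, x ∉ U → x ∉ S₀ → g x ∉ (U ∪ S₀).image f := by
        rcases Nat.eq_zero_or_pos t with h0 | hpos
        · have hUe : U = ∅ := by simp [hU, h0]
          obtain ⟨g, hg, hgW⟩ := hstart k _ hW
          exact ⟨g, hg, by simp [hUe], fun x hx _ hxS => hgW x hx hxS⟩
        · obtain ⟨j, hj, hjU⟩ := hE k hpos
          rw [← hIio, ← hU] at hjU
          have hjt : j.1 < t := hj
          obtain ⟨g, hg, hgj, hgW⟩ := hstep k j f _
            (fun h => hrep ⟨j, hjt, h.symm⟩) (hfΦ j hjt) hW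
          refine ⟨g, hg, fun x hx hxU => hgj x hx (hjU (Finset.mem_inter.2 ⟨hx, hxU⟩)),
            fun x hx hxU hxS => hgW x hx (fun h => hxU (hsub j hjt h)) hxS⟩
      let f' : α → V := fun x => if x ∈ E k then g x else f x
      have hf'g : ∀ x ∈ E k, f' x = g x := fun x hx => by simp [f', hx]
      have hf'f : ∀ x ∈ U ∪ S₀, f' x = f x := by
        intro x hx
        by_cases hxk : x ∈ E k
        · rw [hf'g x hxk]
          rcases Finset.mem_union.1 hx with h | h
          · exact hgU x hxk h
          · rw [hfix k g hgΦ x hxk h, hfS x h]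
        · simp [f', hxk]
      have hnew : ∀ x ∈ E k, x ∉ U ∪ S₀ → ∀ y ∈ U ∪ S₀, f' x ≠ f' y := by
        intro x hx hxU y hy hxy
        rw [hf'g x hx, hf'f y hy] at hxy
        rw [Finset.mem_union, not_or] at hxU
        exact hgW x hx hxU.1 hxU.2 (hxy ▸ Finset.mem_image_of_mem f hy)
      refine ⟨f', ?_, fun x hx => ?_, fun j hj => ?_⟩
      · have hmem : ∀ x ∈ (((E k ⊔ U) ∪ S₀ : Finset α) : Set α), x ∈ U ∪ S₀ ∨
            (x ∈ E k ∧ x ∉ U ∪ S₀) := by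
          intro x hx
          simp only [Finset.coe_union, Finset.sup_eq_union, Set.mem_union, Finset.mem_coe] at hx
          simp only [Finset.mem_union]
          tauto
        intro x hx y hy hxy
        rcases hmem x hx with hx | ⟨hx, hxU⟩ <;> rcases hmem y hy with hy | ⟨hy, hyU⟩
        · rw [hf'f x hx, hf'f y hy] at hxy
          exact hf hx hy hxy
        · exact absurd hxy.symm (hnew y hy hyU x hx)
        · exact absurd hxy (hnew x hx hxU y hy)
        · rw [hf'g x hx, hf'g y hy] at hxy
          exact hinj k g hgΦ hx hy hxy
      · rw [hf'f x (Finset.mem_union_right _ hx), hfS x hx]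
      · rcases Nat.lt_succ_iff_lt_or_eq.1 hj with h | h
        · exact hcongr j f f' (fun x hx =>
            (hf'f x (Finset.mem_union_left _ (hsub j h hx))).symm) (hfΦ j h)
        · have : j = k := Fin.ext h
          rw [this]
          exact hcongr k g f' (fun x hx => (hf'g x hx).symm) hgΦ

/-- The labels in `P` are already placed in `A \ B` by `e'`; the placement extends to a bijection
with `A` under which the labels in `Q` land in `B`. -/
theorem exists_labelling {α ι : Type*} [DecidableEq α] [Fintype ι] [DecidableEq ι]
    (A B : Finset α) (hcard : Fintype.card ι = A.card) (P Q : Finset ι) (e' : ι → α)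
    (hinj : Set.InjOn e' P) (hPA : P.image e' ⊆ A) (hPQ : Disjoint P Q) (hBA : B ⊆ A)
    (hB : ∀ i ∈ P, e' i ∉ B) (hQB : Q.card ≤ B.card) :
    ∃ e : ι ≃ A, (∀ i ∈ P, (e i : α) = e' i) ∧ ∀ i ∈ Q, (e i : α) ∈ B := by
  obtain ⟨ψ⟩ : Nonempty (Q ↪ B) := Function.Embedding.nonempty_of_card_le (by simpa using hQB)
  let φ : ι → α := fun i => if h : i ∈ Q then (ψ ⟨i, h⟩ : α) else e' i
  have hφQ : ∀ i (h : i ∈ Q), φ i = ψ ⟨i, h⟩ := fun i h => by simp [φ, h]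
  have hφP : ∀ i ∈ P, φ i = e' i := fun i h => by
    simp [φ, Finset.disjoint_left.1 hPQ h]
  have hφB : ∀ i ∈ Q, φ i ∈ B := fun i h => by rw [hφQ i h]; exact (ψ ⟨i, h⟩).2
  have hφinj : Set.InjOn φ ((P ∪ Q : Finset ι) : Set ι) := by
    intro i hi j hj hij
    rcases Finset.mem_union.1 (Finset.mem_coe.1 hi) with hi | hi <;>
      rcases Finset.mem_union.1 (Finset.mem_coe.1 hj) with hj | hj
    · rw [hφP i hi, hφP j hj] at hij
      exact hinj hi hj hij
    · exact absurd (hij ▸ hφB j hj) (hφP i hi ▸ hB i hi)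
    · exact absurd (hij ▸ hφB i hi) (hφP j hj ▸ hB j hj)
    · rw [hφQ i hi, hφQ j hj] at hij
      simpa using ψ.injective (Subtype.ext hij)
  have hφA : (P ∪ Q).image φ ⊆ A := by
    intro y hy
    obtain ⟨i, hi, rfl⟩ := Finset.mem_image.1 hy
    rcases Finset.mem_union.1 hi with hi | hi
    · rw [hφP i hi]; exact hPA (Finset.mem_image_of_mem _ hi)
    · exact hBA (hφB i hi)
  obtain ⟨e, he⟩ := Finset.exists_equiv_extend_of_card_eq hcard hφA hφinj
  refine ⟨e, fun i hi => ?_, fun i hi => ?_⟩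
  · rw [he i (Finset.mem_union_left _ hi), hφP i hi]
  · rw [he i (Finset.mem_union_right _ hi)]; exact hφB i hi

/-- The embedding criterion used throughout. The vertices of an edge outside `S₀` are labelled by
`ι` and placed along a tuple of `L`. Any set `P` of coordinates avoiding `Q` can be kept while all
other coordinates receive new values. Positions in `Q` are never kept: they carry vertices of `B E`,
which lie in no other edge of `H`. The vertices of `S₀` are sent to their images under `s₀`. -/
theorem containsCopy_of_tuples {α V ι : Type*} [DecidableEq α] [DecidableEq V]
    [Fintype ι] [DecidableEq ι] {r w : ℕ} (F : Finset (Finset V)) (hFr : ∀ e ∈ F, e.card = r)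
    (H : Finset (Finset α)) (htree : IsRTree r H) (S₀ : Finset α) (s₀ : α → V)
    (hs₀ : Set.InjOn s₀ S₀) (hw : (H.sup id ∪ S₀).card ≤ w)
    (L : Finset (ι → V)) (hL : L.Nonempty) (Q : Finset ι)
    (hrep : ∀ P : Finset ι, Disjoint P Q → ∀ d ∈ L, ∀ W : Finset V, W.card ≤ w →
      ∃ d' ∈ L, (∀ i ∈ P, d' i = d i) ∧ ∀ i ∉ P, d' i ∉ W)
    (B : Finset α → Finset α) (hBQ : ∀ E ∈ H, Q.card ≤ (B E).card)
    (hBE : ∀ E ∈ H, B E ⊆ E \ S₀)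
    (hBd : ∀ E ∈ H, ∀ E' ∈ H, E ≠ E' → Disjoint (B E) E')
    (hcard : ∀ E ∈ H, Fintype.card ι = (E \ S₀).card)
    (hF : ∀ d ∈ L, ∀ E ∈ H, Finset.univ.image d ∪ (E ∩ S₀).image s₀ ∈ F) :
    ContainsCopy F H := by
  obtain ⟨m, E, rfl, hE, hEr⟩ := htree
  have hmem : ∀ i, E i ∈ Finset.image E Finset.univ := fun i =>
    Finset.mem_image_of_mem _ (Finset.mem_univ i)
  have hsup : (Finset.image E Finset.univ).sup id = Finset.univ.sup E := by
    rw [Finset.sup_image]; rfl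
  rw [hsup] at hw
  -- `g` is admissible on `A` if some labelling of `A \ S₀` turns it into a tuple of `L`.
  let Φ : Finset α → (α → V) → Prop := fun A g =>
    ∃ e : ι ≃ (A \ S₀ : Finset α), (∀ i ∈ Q, (e i : α) ∈ B A) ∧ (fun i => g (e i)) ∈ L ∧
      ∀ x ∈ A, x ∈ S₀ → g x = s₀ x
  have himage : ∀ i g, Φ (E i) g → (E i).image g ∈ F := by
    rintro i g ⟨e, -, hgL, hgS⟩
    have := hF _ hgL (E i) (hmem i)
    convert this using 1
    ext y
    simp only [Finset.mem_image, Finset.mem_union, Finset.mem_univ, true_and, Finset.mem_inter]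
    constructor
    · rintro ⟨x, hx, rfl⟩
      by_cases hxS : x ∈ S₀
      · exact Or.inr ⟨x, ⟨hx, hxS⟩, (hgS x hx hxS).symm⟩
      · refine Or.inl ⟨e.symm ⟨x, Finset.mem_sdiff.2 ⟨hx, hxS⟩⟩, by simp⟩
    · rintro (⟨j, rfl⟩ | ⟨x, ⟨hx, hxS⟩, rfl⟩)
      · exact ⟨_, (Finset.mem_sdiff.1 (e j).2).1, rfl⟩
      · exact ⟨x, hx, hgS x hx hxS⟩
  -- From a labelling of `E i` and a tuple of `L`, build a frame on `E i`.
  have hbuild : ∀ i (e : ι ≃ (E i \ S₀ : Finset α)), (∀ j ∈ Q, (e j : α) ∈ B (E i)) →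
      ∀ d ∈ L, ∃ g, Φ (E i) g ∧ ∀ j, g (e j) = d j := by
    intro i e he d hd
    let g : α → V := fun x => if h : x ∈ E i \ S₀ then d (e.symm ⟨x, h⟩) else s₀ x
    have hg : ∀ j, g (e j) = d j := by
      intro j
      have : (e j : α) ∈ E i \ S₀ := (e j).2
      simp only [g, dif_pos this, Subtype.coe_eta, Equiv.symm_apply_apply]
    refine ⟨g, ⟨e, he, ?_, fun x hx hxS => ?_⟩, hg⟩
    · simpa only [hg] using hd
    · have : x ∉ E i \ S₀ := by simp [hxS]
      simp only [g, dif_neg this]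
  have hstart : ∀ i (W : Finset V), W.card ≤ w →
      ∃ g, Φ (E i) g ∧ ∀ x ∈ E i, x ∉ S₀ → g x ∉ W := by
    intro i W hW
    have e₀ : ι ≃ (E i \ S₀ : Finset α) :=
      Fintype.equivOfCardEq (by simpa using hcard _ (hmem i))
    obtain ⟨e, -, heQ⟩ := exists_labelling (E i \ S₀) (B (E i)) (hcard _ (hmem i)) ∅ Q
      (fun j => e₀ j) (by simp) (by simp) (by simp) (hBE _ (hmem i)) (by simp) (hBQ _ (hmem i))
    obtain ⟨d, hd⟩ := hL
    obtain ⟨d', hd', -, hd'W⟩ := hrep ∅ (by simp) d hd W hW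
    obtain ⟨g, hg, hgd⟩ := hbuild i e heQ d' hd'
    refine ⟨g, hg, fun x hx hxS => ?_⟩
    have := hgd (e.symm ⟨x, Finset.mem_sdiff.2 ⟨hx, hxS⟩⟩)
    rw [Equiv.apply_symm_apply] at this
    rw [this]
    exact hd'W _ (by simp)
  have hstep : ∀ i j g (W : Finset V), E i ≠ E j → Φ (E j) g → W.card ≤ w →
      ∃ g', Φ (E i) g' ∧ (∀ x ∈ E i, x ∈ E j → g' x = g x) ∧
        ∀ x ∈ E i, x ∉ E j → x ∉ S₀ → g' x ∉ W := by
    rintro i j g W hij ⟨e', he'Q, hgL, hgS⟩ hW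
    -- Below, `P` is the set of labels of `E j` whose vertices are shared with `E i`; it misses `Q`
    -- because the labels in `Q` sit on vertices of `B (E j)`.
    have he'mem : ∀ a, (e' a : α) ∈ E j ∧ (e' a : α) ∉ S₀ := fun a => Finset.mem_sdiff.1 (e' a).2
    let P : Finset ι := Finset.univ.filter fun a => (e' a : α) ∈ E i
    have hP : ∀ a, a ∈ P ↔ (e' a : α) ∈ E i := fun a => by simp [P]
    have hPQ : Disjoint P Q := Finset.disjoint_left.2 fun a haP haQ =>
      Finset.disjoint_left.1 (hBd _ (hmem j) _ (hmem i) hij.symm) (he'Q a haQ) ((hP a).1 haP)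
    obtain ⟨e, heP, heQ⟩ := exists_labelling (E i \ S₀) (B (E i)) (hcard _ (hmem i)) P Q
      (fun a => e' a) (fun a _ b _ hab => e'.injective (Subtype.ext hab))
      (fun y hy => by
        obtain ⟨a, ha, rfl⟩ := Finset.mem_image.1 hy
        exact Finset.mem_sdiff.2 ⟨(hP a).1 ha, (he'mem a).2⟩)
      hPQ (hBE _ (hmem i))
      (fun a _ hB => Finset.disjoint_left.1 (hBd _ (hmem i) _ (hmem j) hij) hB (he'mem a).1)
      (hBQ _ (hmem i))
    obtain ⟨d', hd', hd'P, hd'W⟩ := hrep P hPQ _ hgL W hW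
    obtain ⟨g', hg', hgd⟩ := hbuild i e heQ d' hd'
    refine ⟨g', hg', fun x hx hxj => ?_, fun x hx hxj hxS => ?_⟩
    · by_cases hxS : x ∈ S₀
      · obtain ⟨-, -, -, hg'S⟩ := hg'
        rw [hg'S x hx hxS, hgS x hxj hxS]
      · obtain ⟨a, ha⟩ := e'.surjective ⟨x, Finset.mem_sdiff.2 ⟨hxj, hxS⟩⟩
        have hax : (e' a : α) = x := by rw [ha]
        have haP : a ∈ P := (hP a).2 (hax ▸ hx)
        have h1 := hgd a
        rw [heP a haP, hd'P a haP, hax] at h1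
        exact h1
    · obtain ⟨a, ha⟩ := e.surjective ⟨x, Finset.mem_sdiff.2 ⟨hx, hxS⟩⟩
      have hax : (e a : α) = x := by rw [ha]
      have haP : a ∉ P := fun haP => hxj (by rw [← hax, heP a haP]; exact (he'mem a).1)
      rw [← hax, hgd a]
      exact hd'W a haP
  obtain ⟨f, hf, -, hfΦ⟩ := exists_partial_embedding (w := w) E hE S₀ s₀ hs₀ Φ
    (by
      rintro i f g hfg ⟨e, he, hL', hS⟩
      have hmemE : ∀ j, (e j : α) ∈ E i := fun j => (Finset.mem_sdiff.1 (e j).2).1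
      refine ⟨e, he, ?_, fun x hx hxS => by rw [← hfg x hx, hS x hx hxS]⟩
      convert hL' using 2 with j
      exact (hfg _ (hmemE j)).symm)
    (by
      intro i g hg
      rw [← Finset.card_image_iff, hFr _ (himage i g hg), hEr i])
    (by
      rintro i g ⟨e, -, -, hS⟩
      exact hS)
    hstart hstep hw m le_rfl
  refine ⟨f, ?_, ?_⟩
  · rw [hsup]
    refine hf.mono ?_
    simp
  · intro A hA
    obtain ⟨i, -, rfl⟩ := Finset.mem_image.1 hA
    exact himage i f (hfΦ i i.2)

/-- If each single coordinate can be replaced by a vertex outside a given set of size `w`, then so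
can all coordinates outside `P` simultaneously. -/
theorem exists_replacement {ι V : Type*} [Fintype ι] [DecidableEq ι] {w : ℕ} (L : Finset (ι → V))
    (h : ∀ d ∈ L, ∀ j, ∀ W : Finset V, W.card ≤ w → ∃ v ∉ W, Function.update d j v ∈ L)
    (P : Finset ι) (d : ι → V) (hd : d ∈ L) (W : Finset V) (hW : W.card ≤ w) :
    ∃ d' ∈ L, (∀ i ∈ P, d' i = d i) ∧ ∀ i ∉ P, d' i ∉ W := by
  have key : ∀ J : Finset ι, ∃ d' ∈ L, (∀ i ∉ J, d' i = d i) ∧ ∀ i ∈ J, d' i ∉ W := by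
    intro J
    induction J using Finset.induction_on with
    | empty => exact ⟨d, hd, by simp, by simp⟩
    | insert j J hj ih =>
      obtain ⟨d', hd', hoff, hon⟩ := ih
      obtain ⟨v, hv, hvL⟩ := h d' hd' j W hW
      refine ⟨_, hvL, fun i hi => ?_, fun i hi => ?_⟩
      · rw [Finset.mem_insert, not_or] at hi
        rw [Function.update_of_ne hi.1, hoff i hi.2]
      · by_cases hij : i = j
        · subst hij; simpa using hv
        · rw [Function.update_of_ne hij]
          exact hon i ((Finset.mem_insert.1 hi).resolve_left hij)
  obtain ⟨d', hd', hoff, hon⟩ := key Pᶜ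
  exact ⟨d', hd', fun i hi => hoff i (by simpa using hi), fun i hi => hon i (by simpa using hi)⟩

/-! ### Shadows -/

/-- Deleting all edges through a shadow set of degree at most `q` does not decrease
`|G| - q |∂G|`; when no such set is left, every shadow set has degree larger than `q`. -/
theorem exists_dense_subfamily {V : Type*} [DecidableEq V] (q : ℕ) (G : Finset (Finset V)) :
    ∃ G' ⊆ G, G.card + q * G'.shadow.card ≤ G'.card + q * G.shadow.card ∧
      ∀ D ∈ G'.shadow, q < (G'.filter (D ⊆ ·)).card := by
  induction G using Finset.strongInduction with
  | H G ih =>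
    by_cases hG : ∀ D ∈ G.shadow, q < (G.filter (D ⊆ ·)).card
    · exact ⟨G, subset_rfl, le_rfl, hG⟩
    · push Not at hG
      obtain ⟨D, hD, hDq⟩ := hG
      let G₁ := G.filter (¬ D ⊆ ·)
      have hsub : G₁ ⊆ G := Finset.filter_subset _ _
      have hcard : (G.filter (D ⊆ ·)).card + G₁.card = G.card :=
        Finset.card_filter_add_card_filter_not _
      have hshadow : G₁.shadow.card + 1 ≤ G.shadow.card := by
        have hDn : D ∉ G₁.shadow := by
          intro h
          obtain ⟨E, hE, a, ha, rfl⟩ := Finset.mem_shadow_iff.1 h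
          exact (Finset.mem_filter.1 hE).2 (Finset.erase_subset _ _)
        exact Finset.card_lt_card ((Finset.ssubset_iff_of_subset
          (Finset.shadow_monotone hsub)).2 ⟨D, hD, hDn⟩)
      have hss : G₁ ⊂ G := by
        refine (Finset.ssubset_iff_of_subset hsub).2 ?_
        obtain ⟨E, hE, a, ha, rfl⟩ := Finset.mem_shadow_iff.1 hD
        exact ⟨E, hE, fun h => (Finset.mem_filter.1 h).2 (Finset.erase_subset _ _)⟩
      obtain ⟨G', hG', hle, hdeg⟩ := ih G₁ hss
      refine ⟨G', hG'.trans hsub, ?_, hdeg⟩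
      have : q * G₁.shadow.card + q ≤ q * G.shadow.card := by
        rw [← Nat.mul_succ]; exact Nat.mul_le_mul_left _ hshadow
      omega

/-- The vertices `v` that complete `D` to an edge of `G`. -/
def extensions {V : Type*} [DecidableEq V] [Fintype V] (G : Finset (Finset V)) (D : Finset V) :
    Finset V :=
  Finset.univ.filter fun v => v ∉ D ∧ insert v D ∈ G

theorem card_filter_le_extensions {V : Type*} [DecidableEq V] [Fintype V] {r : ℕ}
    (G : Finset (Finset V)) (hG : ∀ E ∈ G, E.card = r) (D : Finset V) (hD : D.card + 1 = r) :
    (G.filter (D ⊆ ·)).card ≤ (extensions G D).card := by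
  refine (Finset.card_le_card (t := (extensions G D).image (fun v => insert v D)) ?_).trans
    Finset.card_image_le
  intro E hE
  obtain ⟨hEG, hDE⟩ := Finset.mem_filter.1 hE
  obtain ⟨v, hv, rfl⟩ := Finset.exists_eq_insert_iff.2 ⟨hDE, by rw [hD, hG E hEG]⟩
  exact Finset.mem_image.2 ⟨v, by simp [extensions, hv, hEG], rfl⟩

theorem card_add_one_of_mem_shadow {V : Type*} [DecidableEq V] {r : ℕ}
    (G : Finset (Finset V)) (hG : ∀ E ∈ G, E.card = r) (D : Finset V) (hD : D ∈ G.shadow) :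
    D.card + 1 = r := by
  obtain ⟨E, hE, a, ha, rfl⟩ := Finset.mem_shadow_iff.1 hD
  rw [Finset.card_erase_add_one ha, hG E hE]

/-- An `H`-free family satisfies `|G| ≤ w |∂G|`: otherwise it has a nonempty subfamily in which
every shadow set has degree larger than `w`, so every vertex of every edge can be replaced by a fresh
one and the tree `H` embeds. -/
theorem card_le_mul_card_shadow {α V : Type*} [DecidableEq α] [DecidableEq V] [Fintype V]
    [Nonempty V] {r w : ℕ} (G : Finset (Finset V)) (hGr : ∀ e ∈ G, e.card = r)
    (H : Finset (Finset α)) (htree : IsRTree r H) (hw : (H.sup id).card ≤ w)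
    (hcopy : ¬ ContainsCopy G H) : G.card ≤ w * G.shadow.card := by
  by_contra! hlt
  obtain ⟨G', hG', hle, hdeg⟩ := exists_dense_subfamily w G
  have hG'r : ∀ e ∈ G', e.card = r := fun e he => hGr e (hG' he)
  obtain ⟨E₀, hE₀⟩ : G'.Nonempty := by
    rw [← Finset.card_pos]; omega
  have hHr : ∀ E ∈ H, E.card = r := by
    obtain ⟨m, E, rfl, -, hEr⟩ := htree
    intro A hA
    obtain ⟨i, -, rfl⟩ := Finset.mem_image.1 hA
    exact hEr i
  refine hcopy (containsCopy_of_tuples (w := w) G hGr H htree ∅ (fun _ => Classical.arbitrary V)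
    (by simp) (by simpa using hw)
    (Finset.univ.filter fun d : Fin r → V => Finset.univ.image d ∈ G') ?_ ∅ ?_ (fun _ => ∅)
    (by simp) (by simp) (by simp) (fun E hE => by simp [hHr E hE]) ?_)
  · have e := E₀.equivFinOfCardEq (hG'r _ hE₀)
    refine ⟨fun i => e.symm i, ?_⟩
    rw [Finset.mem_filter]
    refine ⟨Finset.mem_univ _, ?_⟩
    convert hE₀
    ext y
    simp only [Finset.mem_image, Finset.mem_univ, true_and]
    exact ⟨fun ⟨i, hi⟩ => hi ▸ (e.symm i).2, fun hy => ⟨e ⟨y, hy⟩, by simp⟩⟩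
  · intro P _ d hd W hW
    refine exists_replacement _ ?_ P d hd W hW
    intro d hd j W hW
    have hd := (Finset.mem_filter.1 hd).2
    have hinj : Function.Injective d := by
      have : (Finset.univ.image d).card = (Finset.univ : Finset (Fin r)).card := by
        rw [hG'r _ hd]; simp
      simpa using Finset.card_image_iff.1 this
    let D := (Finset.univ.image d).erase (d j)
    have hDsh : D ∈ G'.shadow :=
      Finset.erase_mem_shadow hd (Finset.mem_image_of_mem d (Finset.mem_univ j))
    have hext := (hdeg D hDsh).trans_le (card_filter_le_extensions G' hG'r D
      (card_add_one_of_mem_shadow G' hG'r D hDsh))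
    obtain ⟨v, hv, hvW⟩ := Finset.exists_mem_notMem_of_card_lt_card (hW.trans_lt hext)
    refine ⟨v, hvW, ?_⟩
    rw [Finset.mem_filter]
    refine ⟨Finset.mem_univ _, ?_⟩
    have hv := (Finset.mem_filter.1 hv).2.2
    convert hv
    ext y
    simp only [D, Finset.mem_image, Finset.mem_univ, true_and, Finset.mem_insert,
      Finset.mem_erase]
    constructor
    · rintro ⟨i, rfl⟩
      by_cases hij : i = j
      · subst hij; simp
      · rw [Function.update_of_ne hij]
        exact Or.inr ⟨fun h => hij (hinj h), i, rfl⟩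
    · rintro (rfl | ⟨hy, i, rfl⟩)
      · exact ⟨j, by simp⟩
      · refine ⟨i, Function.update_of_ne (fun h => hy (by rw [h])) _ _⟩
  · intro d hd E hE
    simpa using hG' (Finset.mem_filter.1 hd).2

/-! ### Confining the completing vertices -/

/-- The tuple `d` with its coordinate `j` forgotten. -/
def dropCoord {ι V : Type*} (j : ι) (d : ι → V) : {i // i ≠ j} → V := fun i => d i

theorem update_eq_of_dropCoord_eq {ι V : Type*} [DecidableEq ι] {j : ι} {d d' : ι → V}
    (h : dropCoord j d' = dropCoord j d) : Function.update d j (d' j) = d' := by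
  ext i
  by_cases hij : i = j
  · subst hij; simp
  · rw [Function.update_of_ne hij]
    exact (congrFun h ⟨i, hij⟩).symm

theorem card_le_of_fibers {ι V : Type*} [Fintype ι] [DecidableEq ι] [Fintype V] [DecidableEq V]
    (Z : Finset (ι → V)) (j : ι) (b : ℕ)
    (h : ∀ c, (Z.filter fun d => dropCoord j d = c).card ≤ b) :
    Z.card ≤ b * Fintype.card V ^ (Fintype.card ι - 1) := by
  have := Finset.card_le_mul_card_image_of_maps_to (s := Z) (t := Finset.univ)
    (f := dropCoord j) (fun _ _ => Finset.mem_univ _) b (fun c _ => h c)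
  simpa [Fintype.card_subtype_compl] using this

/-- Here `T d` is a set of vertices completing the `(r - 1)`-tuple `d` to an edge of `F`. Suppose
every coordinate of a tuple in `Y` can be replaced, and that coordinate `p` can be replaced together
with the completing vertex. Then `F` contains `H`: the two vertices of degree one in each edge of `H`
are placed at coordinate `p` and at the completing vertex, which are thus never reused. -/
theorem containsCopy_of_pair_replaceable {α V ι : Type*} [DecidableEq α] [DecidableEq V]
    [Nonempty V] [Fintype V] [Fintype ι] [DecidableEq ι] {r w : ℕ} (F : Finset (Finset V))
    (hFr : ∀ e ∈ F, e.card = r) (H : Finset (Finset α)) (htree : IsRTree r H)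
    (hred : Reducible 2 H) (hw : (H.sup id).card ≤ w) (hι : Fintype.card ι + 1 = r)
    (T : (ι → V) → Finset V) (Y : Finset (ι → V)) (hY : Y.Nonempty)
    (hT : ∀ d ∈ Y, (T d).Nonempty)
    (hTF : ∀ d ∈ Y, ∀ v ∈ T d, insert v (Finset.univ.image d) ∈ F)
    (hupd : ∀ d ∈ Y, ∀ j, ∀ W : Finset V, W.card ≤ w → ∃ v ∉ W, Function.update d j v ∈ Y)
    (p : ι) (hp : ∀ d ∈ Y, ∀ W : Finset V, W.card ≤ w →
      ∃ v ∉ W, Function.update d p v ∈ Y ∧ ∃ u ∈ T (Function.update d p v), u ∉ W) :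
    ContainsCopy F H := by
  have hHr : ∀ E ∈ H, E.card = r := by
    obtain ⟨m, E, rfl, -, hEr⟩ := htree
    intro A hA
    obtain ⟨i, -, rfl⟩ := Finset.mem_image.1 hA
    exact hEr i
  -- Ordered edges: `none` indexes the completing vertex, `some i` the coordinate `i`.
  let L : Finset (Option ι → V) := Finset.univ.filter fun d =>
    (fun i => d (some i)) ∈ Y ∧ d none ∈ T fun i => d (some i)
  have hL : ∀ d, d ∈ L ↔ (fun i => d (some i)) ∈ Y ∧ d none ∈ T fun i => d (some i) :=
    fun d => by simp [L]
  refine containsCopy_of_tuples (w := w) F hFr H htree ∅ (fun _ => Classical.arbitrary V)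
    (by simp) (by simpa using hw) L ?_ {none, some p} ?_
    (fun E => E.filter fun x => hdeg H x = 1) ?_ ?_ ?_ ?_ ?_
  · obtain ⟨d, hd⟩ := hY
    obtain ⟨v, hv⟩ := hT d hd
    exact ⟨fun i => i.elim v d, (hL _).2 ⟨hd, hv⟩⟩
  · intro P hPQ d hd W hW
    have hnone : none ∉ P := fun h => Finset.disjoint_left.1 hPQ h (by simp)
    have hpP : some p ∉ P := fun h => Finset.disjoint_left.1 hPQ h (by simp)
    obtain ⟨d₁, hd₁, hP₁, hW₁⟩ := exists_replacement Y hupd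
      (Finset.univ.filter fun i => some i ∈ P) _ ((hL d).1 hd).1 W hW
    obtain ⟨v, hvW, hvY, u, hu, huW⟩ := hp d₁ hd₁ W hW
    refine ⟨fun i => i.elim u (Function.update d₁ p v), (hL _).2 ⟨hvY, hu⟩, ?_, ?_⟩
    · rintro (_ | i) hi
      · exact absurd hi hnone
      · have hip : i ≠ p := fun h => hpP (h ▸ hi)
        simp only [Option.elim_some, Function.update_of_ne hip]
        exact hP₁ i (by simpa using hi)
    · rintro (_ | i) hi
      · exact huW
      · by_cases hip : i = p
        · subst hip; simpa using hvW
        · simp only [Option.elim_some, Function.update_of_ne hip]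
          exact hW₁ i (by simpa using hi)
  · intro E hE
    exact Finset.card_le_two.trans (hred E hE)
  · intro E _
    simp
  · intro E hE E' hE' hne
    refine Finset.disjoint_left.2 fun x hx hxE' => hne ?_
    obtain ⟨hxE, hx1⟩ := Finset.mem_filter.1 hx
    exact Finset.card_le_one.1 hx1.le E (by simp [hE, hxE]) E' (by simp [hE', hxE'])
  · intro E hE
    simp [hHr E hE, hι]
  · intro d hd E _
    obtain ⟨hdY, hdT⟩ := (hL d).1 hd
    convert hTF _ hdY _ hdT using 1
    ext y
    simp [Option.exists, eq_comm]

/-- If `F` is `H`-free, then after discarding `O(n ^ (k - 1))` of the `k`-tuples in `Y`, the set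
`T d` is contained in at most `w` vertices that depend only on the coordinates of `d` other
than `p`. -/
theorem exists_confined_subfamily {α V ι : Type*} [DecidableEq α] [DecidableEq V]
    [Nonempty V] [Fintype V] [Fintype ι] [DecidableEq ι] {r w : ℕ} (F : Finset (Finset V))
    (hFr : ∀ e ∈ F, e.card = r) (H : Finset (Finset α)) (htree : IsRTree r H)
    (hred : Reducible 2 H) (hw : (H.sup id).card ≤ w) (hι : Fintype.card ι + 1 = r)
    (hcopy : ¬ ContainsCopy F H)
    (T : (ι → V) → Finset V) (Y : Finset (ι → V)) (hT : ∀ d ∈ Y, (T d).Nonempty)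
    (hTF : ∀ d ∈ Y, ∀ v ∈ T d, insert v (Finset.univ.image d) ∈ F) (p : ι) :
    ∃ Y' ⊆ Y, (∃ C : ({i // i ≠ p} → V) → Finset V, (∀ c, (C c).card ≤ w) ∧
        ∀ d ∈ Y', T d ⊆ C (dropCoord p d)) ∧
      Y.card ≤ Y'.card + (Fintype.card ι + 1) * w * Fintype.card V ^ (Fintype.card ι - 1) := by
  let N := Fintype.card V ^ (Fintype.card ι - 1)
  -- Reason `some j`: coordinate `j` has few replacements within `Z`. Reason `none`: coordinate `p`
  -- and the completing vertex cannot be replaced together.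
  let bad : Finset (ι → V) → Option ι → (ι → V) → Prop := fun Z o d => o.elim
    (∃ W : Finset V, W.card ≤ w ∧ ∀ v, Function.update d p v ∈ Z →
      v ∈ W ∨ T (Function.update d p v) ⊆ W)
    (fun j => ∃ W : Finset V, W.card ≤ w ∧ ∀ v, Function.update d j v ∈ Z → v ∈ W)
  obtain ⟨ρ, hρ⟩ := exists_peeling bad (by
    rintro Z Z' (_ | j) d hZ ⟨W, hW, h⟩
    · exact ⟨W, hW, fun v hv => h v (hZ hv)⟩
    · exact ⟨W, hW, fun v hv => h v (hZ hv)⟩) Y (by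
    intro Z hZY hZ
    by_contra! hgood
    refine hcopy (containsCopy_of_pair_replaceable F hFr H htree hred hw hι T Z hZ
      (fun d hd => hT d (hZY hd)) (fun d hd => hTF d (hZY hd)) ?_ p ?_)
    · intro d hd j W hW
      by_contra! h
      exact hgood d hd (some j) ⟨W, hW, fun v hv => by_contra fun hvW => h v hvW hv⟩
    · intro d hd W hW
      by_contra! h
      exact hgood d hd none ⟨W, hW, fun v hv => or_iff_not_imp_left.2 fun hvW => h v hvW hv⟩)
  have hsome : ∀ j, (Y.filter fun d => ρ d = some j).card ≤ w * N := by
    intro j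
    refine card_le_of_fibers _ j w fun c => ?_
    set Z := (Y.filter fun d => ρ d = some j).filter fun d => dropCoord j d = c with hZ
    rcases Z.eq_empty_or_nonempty with h | h
    · simp [h]
    · obtain ⟨d, hd, hbad⟩ := hρ Z
        ((Finset.filter_subset _ _).trans (Finset.filter_subset _ _)) h
      obtain ⟨hd1, hd2⟩ := Finset.mem_filter.1 hd
      rw [(Finset.mem_filter.1 hd1).2] at hbad
      obtain ⟨W, hW, hWZ⟩ := hbad
      refine (Finset.card_le_card_of_injOn (fun d' => d' j) (t := W) ?_ ?_).trans hW
      · intro d' hd'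
        have := update_eq_of_dropCoord_eq (j := j) (d := d) (d' := d')
          ((Finset.mem_filter.1 hd').2.trans hd2.symm)
        exact hWZ _ (by rw [this]; exact hd')
      · intro d₁ h₁ d₂ h₂ h12
        have h := (Finset.mem_filter.1 h₁).2.trans (Finset.mem_filter.1 h₂).2.symm
        have := update_eq_of_dropCoord_eq h
        dsimp only at h12
        rw [← this, h12, Function.update_eq_self]
  have hnone : ∀ c, ∃ W : Finset V, W.card ≤ w ∧ ∀ d ∈ Y, ρ d = none → dropCoord p d = c →
      d p ∈ W ∨ T d ⊆ W := by
    intro c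
    set Z := (Y.filter fun d => ρ d = none).filter fun d => dropCoord p d = c with hZ
    rcases Z.eq_empty_or_nonempty with h | h
    · refine ⟨∅, by simp, fun d hd h1 h2 => ?_⟩
      have : d ∈ Z := by simp [hZ, hd, h1, h2]
      simp [h] at this
    · obtain ⟨d, hd, hbad⟩ := hρ Z
        ((Finset.filter_subset _ _).trans (Finset.filter_subset _ _)) h
      obtain ⟨hd1, hd2⟩ := Finset.mem_filter.1 hd
      rw [(Finset.mem_filter.1 hd1).2] at hbad
      obtain ⟨W, hW, hWZ⟩ := hbad
      refine ⟨W, hW, fun d' hd' h1 h2 => ?_⟩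
      have hu := update_eq_of_dropCoord_eq (h2.trans hd2.symm)
      have := hWZ (d' p) (by rw [hu]; simp [hZ, hd', h1, h2])
      rwa [hu] at this
  choose C hCw hC using hnone
  -- Discarded are the tuples with reason `some j`, at most `w` per fibre of `dropCoord j`, and those
  -- with reason `none` and `d p ∈ C (dropCoord p d)`, at most `w` per fibre of `dropCoord p`.
  let Zn := Y.filter fun d => ρ d = none
  let Y' := Zn.filter fun d => d p ∉ C (dropCoord p d)
  refine ⟨Y', (Finset.filter_subset _ _).trans (Finset.filter_subset _ _),
    ⟨C, hCw, fun d hd => ?_⟩, ?_⟩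
  · obtain ⟨hd1, hd2⟩ := Finset.mem_filter.1 hd
    obtain ⟨hdY, hdρ⟩ := Finset.mem_filter.1 hd1
    exact (hC _ d hdY hdρ rfl).resolve_left hd2
  · have hdrop : (Zn.filter fun d => ¬ d p ∉ C (dropCoord p d)).card ≤ w * N := by
      refine card_le_of_fibers _ p w fun c => ?_
      refine (Finset.card_le_card_of_injOn (fun d' => d' p) (t := C c) ?_ ?_).trans (hCw c)
      · intro d' hd'
        obtain ⟨h1, h2⟩ := Finset.mem_filter.1 hd'
        have := (Finset.mem_filter.1 h1).2
        rw [h2] at this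
        exact not_not.1 this
      · intro d₁ h₁ d₂ h₂ h12
        have h := (Finset.mem_filter.1 h₁).2.trans (Finset.mem_filter.1 h₂).2.symm
        have := update_eq_of_dropCoord_eq h
        dsimp only at h12
        rw [← this, h12, Function.update_eq_self]
    have hZn : Zn.card ≤ Y'.card + w * N := by
      rw [← Finset.card_filter_add_card_filter_not (s := Zn) fun d => d p ∉ C (dropCoord p d)]
      exact Nat.add_le_add_left hdrop _
    have hsum : Y.card = ∑ o : Option ι, (Y.filter fun d => ρ d = o).card :=
      Finset.card_eq_sum_card_fiberwise (fun _ _ => Finset.mem_coe.2 (Finset.mem_univ _))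
    rw [hsum, Fintype.sum_option]
    have hs : ∑ j : ι, (Y.filter fun d => ρ d = some j).card ≤ Fintype.card ι * (w * N) := by
      refine (Finset.sum_le_card_nsmul _ _ _ fun j _ => hsome j).trans ?_
      simp
    calc _ ≤ (Y'.card + w * N) + Fintype.card ι * (w * N) := Nat.add_le_add hZn hs
      _ = _ := by ring

/-! ### The bound -/

/-- If `T d` is confined in every coordinate, then there are `O(n ^ (k - 1))` tuples. Choose
`S d ⊆ T d` of the size of the cross-cut `S₀`. If every coordinate of every tuple of some nonempty
family could be replaced without changing `S d`, then `H` would embed with `S₀` mapped onto one of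
these sets. Hence peeling applies, and it leaves at most `w` tuples per fibre of `dropCoord j` and per
value of `S d`, of which there are at most `2 ^ w` in each fibre. -/
theorem card_le_of_confined {α V ι : Type*} [DecidableEq α] [DecidableEq V]
    [Nonempty V] [Fintype V] [Fintype ι] [DecidableEq ι] {r w : ℕ} (F : Finset (Finset V))
    (hFr : ∀ e ∈ F, e.card = r) (H : Finset (Finset α)) (htree : IsRTree r H)
    (S₀ : Finset α) (hS₀ : IsCrossCut H S₀) (hw : (H.sup id ∪ S₀).card ≤ w)
    (hι : Fintype.card ι + 1 = r) (hιne : Nonempty ι) (hcopy : ¬ ContainsCopy F H)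
    (T : (ι → V) → Finset V) (Y : Finset (ι → V)) (hT : ∀ d ∈ Y, S₀.card ≤ (T d).card)
    (hTF : ∀ d ∈ Y, ∀ v ∈ T d, insert v (Finset.univ.image d) ∈ F)
    (hconf : ∀ p, ∃ C : ({i // i ≠ p} → V) → Finset V, (∀ c, (C c).card ≤ w) ∧
        ∀ d ∈ Y, T d ⊆ C (dropCoord p d)) :
    Y.card ≤ Fintype.card ι * (w * 2 ^ w * Fintype.card V ^ (Fintype.card ι - 1)) := by
  have hHr : ∀ E ∈ H, E.card = r := by
    obtain ⟨m, E, rfl, -, hEr⟩ := htree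
    intro A hA
    obtain ⟨i, -, rfl⟩ := Finset.mem_image.1 hA
    exact hEr i
  have hsel : ∀ d, ∃ S : Finset V, d ∈ Y → S ⊆ T d ∧ S.card = S₀.card := by
    intro d
    by_cases hd : d ∈ Y
    · obtain ⟨S, hS⟩ := Finset.exists_subset_card_eq (hT d hd)
      exact ⟨S, fun _ => hS⟩
    · exact ⟨∅, fun h => absurd h hd⟩
  choose S hS using hsel
  obtain ⟨ρ, hρ⟩ := exists_peeling
    (fun (Z : Finset (ι → V)) (j : ι) d => ∃ W : Finset V, W.card ≤ w ∧
      ∀ v, Function.update d j v ∈ Z → S (Function.update d j v) = S d → v ∈ W)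
    (by
      rintro Z Z' j d hZ ⟨W, hW, h⟩
      exact ⟨W, hW, fun v hv => h v (hZ hv)⟩) Y (by
    intro Z hZY hZ
    by_contra! hgood
    obtain ⟨d₀, hd₀⟩ := hZ
    have e : S₀ ≃ S d₀ := Finset.equivOfCardEq (hS d₀ (hZY hd₀)).2.symm
    let s₀ : α → V := fun x => if h : x ∈ S₀ then e ⟨x, h⟩ else Classical.arbitrary V
    have hs₀e : ∀ x (h : x ∈ S₀), s₀ x = e ⟨x, h⟩ := fun x h => by simp [s₀, h]
    refine hcopy (containsCopy_of_tuples (w := w) F hFr H htree S₀ s₀ ?_ hw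
      (Z.filter fun d => S d = S d₀) ⟨d₀, by simp [hd₀]⟩ ∅ ?_ (fun _ => ∅)
      (by simp) (by simp) (by simp) ?_ ?_)
    · intro x hx y hy hxy
      rw [hs₀e x hx, hs₀e y hy] at hxy
      simpa using e.injective (Subtype.ext hxy)
    · intro P _ d hd W hW
      refine exists_replacement _ ?_ P d hd W hW
      intro d hd j W hW
      obtain ⟨hdZ, hdS⟩ := Finset.mem_filter.1 hd
      obtain ⟨v, hvZ, hvS, hvW⟩ := hgood d hdZ j W hW
      exact ⟨v, hvW, Finset.mem_filter.2 ⟨hvZ, hvS.trans hdS⟩⟩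
    · intro E hE
      have h1 := Finset.card_sdiff_add_card_inter E S₀
      rw [hS₀ E hE, hHr E hE] at h1
      omega
    · intro d hd E hE
      obtain ⟨hdZ, hdS⟩ := Finset.mem_filter.1 hd
      obtain ⟨x, hx⟩ := Finset.card_eq_one.1 (hS₀ E hE)
      have hxS : x ∈ S₀ := (Finset.mem_inter.1 (hx ▸ Finset.mem_singleton_self x)).2
      rw [hx, Finset.image_singleton, Finset.union_singleton]
      refine hTF d (hZY hdZ) _ ((hS d (hZY hdZ)).1 ?_)
      rw [hdS, hs₀e x hxS]
      exact (e ⟨x, hxS⟩).2)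
  have hj : ∀ j, (Y.filter fun d => ρ d = j).card ≤
      w * 2 ^ w * Fintype.card V ^ (Fintype.card ι - 1) := by
    intro j
    refine card_le_of_fibers _ j _ fun c => ?_
    obtain ⟨C, hCw, hC⟩ := hconf j
    set Z := (Y.filter fun d => ρ d = j).filter fun d => dropCoord j d = c with hZ
    have hmem : ∀ d, d ∈ Z ↔ d ∈ Y ∧ ρ d = j ∧ dropCoord j d = c := fun d => by
      simp [hZ, and_assoc]
    have hmaps : ∀ d ∈ Z, S d ∈ (C c).powerset := fun d hd => by
      obtain ⟨hdY, -, hdc⟩ := (hmem d).1 hd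
      exact Finset.mem_powerset.2 ((hS d hdY).1.trans (hdc ▸ hC d hdY))
    have hfib : ∀ A ∈ (C c).powerset, (Z.filter fun d => S d = A).card ≤ w := by
      intro A _
      rcases (Z.filter fun d => S d = A).eq_empty_or_nonempty with h | h
      · simp [h]
      · obtain ⟨d, hd, W, hW, hWZ⟩ := hρ _ (fun d hd =>
          ((hmem d).1 (Finset.mem_filter.1 hd).1).1) h
        obtain ⟨hdZ, hdA⟩ := Finset.mem_filter.1 hd
        obtain ⟨-, hdj, hdc⟩ := (hmem d).1 hdZ
        rw [hdj] at hWZ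
        refine (Finset.card_le_card_of_injOn (fun d' => d' j) (t := W) ?_ ?_).trans hW
        · intro d' hd'
          obtain ⟨hd'Z, hd'A⟩ := Finset.mem_filter.1 hd'
          have := update_eq_of_dropCoord_eq (j := j) (d := d) (d' := d')
            (((hmem d').1 hd'Z).2.2.trans hdc.symm)
          exact hWZ _ (by rw [this]; exact hd') (by rw [this, hd'A, hdA])
        · intro d₁ h₁ d₂ h₂ h12
          have h := ((hmem _).1 (Finset.mem_filter.1 h₁).1).2.2.trans
            ((hmem _).1 (Finset.mem_filter.1 h₂).1).2.2.symm
          have := update_eq_of_dropCoord_eq h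
          dsimp only at h12
          rw [← this, h12, Function.update_eq_self]
    refine (Finset.card_le_mul_card_image_of_maps_to hmaps w hfib).trans ?_
    rw [Finset.card_powerset]
    exact Nat.mul_le_mul_left _ (Nat.pow_le_pow_right (by norm_num) (hCw c))
  have hsum : Y.card = ∑ j : ι, (Y.filter fun d => ρ d = j).card :=
    Finset.card_eq_sum_card_fiberwise (fun _ _ => Finset.mem_coe.2 (Finset.mem_univ _))
  rw [hsum]
  refine (Finset.sum_le_card_nsmul _ _ _ fun j _ => hj j).trans ?_
  simp

/-- The tuples are confined one coordinate after the other, at a cost of `O(n ^ (k - 1))` tuples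
each time. -/
theorem card_tuples_le {α V ι : Type*} [DecidableEq α] [DecidableEq V]
    [Nonempty V] [Fintype V] [Fintype ι] [DecidableEq ι] {r w : ℕ} (F : Finset (Finset V))
    (hFr : ∀ e ∈ F, e.card = r) (H : Finset (Finset α)) (htree : IsRTree r H)
    (hred : Reducible 2 H) (S₀ : Finset α) (hS₀ : IsCrossCut H S₀) (hS₀pos : 0 < S₀.card)
    (hw : (H.sup id ∪ S₀).card ≤ w) (hι : Fintype.card ι + 1 = r) (hιne : Nonempty ι)
    (hcopy : ¬ ContainsCopy F H)
    (T : (ι → V) → Finset V) (X : Finset (ι → V)) (hT : ∀ d ∈ X, S₀.card ≤ (T d).card)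
    (hTF : ∀ d ∈ X, ∀ v ∈ T d, insert v (Finset.univ.image d) ∈ F) :
    X.card ≤ Fintype.card ι * ((Fintype.card ι + 1) * w + w * 2 ^ w) *
      Fintype.card V ^ (Fintype.card ι - 1) := by
  have hw' : (H.sup id).card ≤ w :=
    (Finset.card_le_card Finset.subset_union_left).trans hw
  have key : ∀ J : Finset ι, ∃ Y ⊆ X, (∀ p ∈ J, ∃ C : ({i // i ≠ p} → V) → Finset V,
      (∀ c, (C c).card ≤ w) ∧ ∀ d ∈ Y, T d ⊆ C (dropCoord p d)) ∧
      X.card ≤ Y.card +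
        J.card * ((Fintype.card ι + 1) * w * Fintype.card V ^ (Fintype.card ι - 1)) := by
    intro J
    induction J using Finset.induction_on with
    | empty => exact ⟨X, subset_rfl, by simp, by simp⟩
    | insert p J hp ih =>
      obtain ⟨Y, hYX, hconf, hle⟩ := ih
      obtain ⟨Y', hY'Y, hY'p, hle'⟩ := exists_confined_subfamily F hFr H htree hred hw' hι hcopy T Y
        (fun d hd => Finset.card_pos.1 (hS₀pos.trans_le (hT d (hYX hd))))
        (fun d hd => hTF d (hYX hd)) p
      refine ⟨Y', hY'Y.trans hYX, fun q hq => ?_, ?_⟩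
      · rcases Finset.mem_insert.1 hq with rfl | hq
        · exact hY'p
        · obtain ⟨C, hCw, hC⟩ := hconf q hq
          exact ⟨C, hCw, fun d hd => hC d (hY'Y hd)⟩
      · rw [Finset.card_insert_of_notMem hp, Nat.add_mul, one_mul]
        omega
  obtain ⟨Y, hYX, hconf, hle⟩ := key Finset.univ
  have hY := card_le_of_confined F hFr H htree S₀ hS₀ hw hι hιne hcopy T Y
    (fun d hd => hT d (hYX hd)) (fun d hd => hTF d (hYX hd)) (fun p => hconf p (Finset.mem_univ p))
  rw [Finset.card_univ] at hle
  refine (hle.trans (Nat.add_le_add_right hY _)).trans (le_of_eq ?_)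
  ring

/-- The cross-cut number is attained: one vertex of degree one from each edge gives a cross-cut, so
`crossCutNum` is not the infimum of the empty set. -/
theorem exists_crossCut {α : Type*} [DecidableEq α] (H : Finset (Finset α))
    (hred : Reducible 2 H) : ∃ S : Finset α, IsCrossCut H S ∧ S.card = crossCutNum H := by
  refine Nat.sInf_mem (s := {k | ∃ S : Finset α, IsCrossCut H S ∧ S.card = k}) ?_
  have hx : ∀ E : H, ∃ x ∈ E.1, hdeg H x = 1 := by
    intro E
    obtain ⟨x, hx⟩ := Finset.card_pos.1 (lt_of_lt_of_le (by norm_num) (hred E.1 E.2))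
    exact ⟨x, (Finset.mem_filter.1 hx).1, (Finset.mem_filter.1 hx).2⟩
  choose x hxE hx1 using hx
  refine ⟨_, H.attach.image x, fun E hE => ?_, rfl⟩
  refine Finset.card_eq_one.2 ⟨x ⟨E, hE⟩, ?_⟩
  ext y
  simp only [Finset.mem_inter, Finset.mem_image, Finset.mem_attach, true_and,
    Finset.mem_singleton]
  constructor
  · rintro ⟨hy, E', rfl⟩
    have : E = E'.1 := Finset.card_le_one.1 (hx1 E').le E (by simp [hE, hy]) E'.1
      (by simp [hxE])
    congr 1
    exact Subtype.ext this.symm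
  · rintro rfl
    exact ⟨hxE _, _, rfl⟩

/-- The extremal bound with explicit constant: restricting to a subfamily whose shadow sets all
have degree at least `|S₀|` costs the main term, and both the shadow of that subfamily and the
subfamily itself have size `O(n ^ (r - 2))`. -/
theorem card_le_of_not_containsCopy {α V : Type*} [DecidableEq α] [DecidableEq V]
    [Nonempty V] [Fintype V] {r w : ℕ} (hr : 2 ≤ r) (F : Finset (Finset V))
    (hFr : ∀ e ∈ F, e.card = r) (H : Finset (Finset α)) (htree : IsRTree r H)
    (hred : Reducible 2 H) (S₀ : Finset α) (hS₀ : IsCrossCut H S₀) (hS₀pos : 0 < S₀.card)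
    (hw : (H.sup id ∪ S₀).card ≤ w) (hcopy : ¬ ContainsCopy F H) :
    F.card ≤ (S₀.card - 1) * (Fintype.card V).choose (r - 1) +
      w * (r * (r * w + w * 2 ^ w)) * Fintype.card V ^ (r - 2) := by
  obtain ⟨G, hGF, hle, hdeg⟩ := exists_dense_subfamily (S₀.card - 1) F
  have hGr : ∀ e ∈ G, e.card = r := fun e he => hFr e (hGF he)
  have hGcopy : ¬ ContainsCopy G H := fun ⟨f, hf, h⟩ => hcopy ⟨f, hf, fun E hE => hGF (h E hE)⟩
  have hGsh := card_le_mul_card_shadow G hGr H htree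
    ((Finset.card_le_card Finset.subset_union_left).trans hw) hGcopy
  have hshcard : ∀ D ∈ G.shadow, D.card + 1 = r := card_add_one_of_mem_shadow G hGr
  let X : Finset (Fin (r - 1) → V) := Finset.univ.filter fun d => Finset.univ.image d ∈ G.shadow
  have hXsh : G.shadow.card ≤ X.card := by
    refine (Finset.card_le_card (t := X.image fun d => Finset.univ.image d) ?_).trans
      Finset.card_image_le
    intro D hD
    have e := D.equivFinOfCardEq (n := r - 1) (by have := hshcard D hD; omega)
    have hDe : Finset.univ.image (fun i => (e.symm i : V)) = D := by
      ext y
      simp only [Finset.mem_image, Finset.mem_univ, true_and]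
      exact ⟨fun ⟨i, hi⟩ => hi ▸ (e.symm i).2, fun hy => ⟨e ⟨y, hy⟩, by simp⟩⟩
    refine Finset.mem_image.2 ⟨fun i => (e.symm i : V), ?_, hDe⟩
    rw [Finset.mem_filter, hDe]
    exact ⟨Finset.mem_univ _, hD⟩
  have hX := card_tuples_le (ι := Fin (r - 1)) G hGr H htree hred S₀ hS₀ hS₀pos hw
    (by simp; omega) ⟨⟨0, by omega⟩⟩ hGcopy (fun d => extensions G (Finset.univ.image d)) X
    (by
      intro d hd
      have hD := (Finset.mem_filter.1 hd).2
      have h1 := hdeg _ hD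
      have h2 := card_filter_le_extensions G hGr _ (hshcard _ hD)
      omega)
    (by
      intro d _ v hv
      exact (Finset.mem_filter.1 hv).2.2)
  have hFsh : F.shadow.card ≤ (Fintype.card V).choose (r - 1) := by
    rw [← Finset.card_univ, ← Finset.card_powersetCard]
    refine Finset.card_le_card fun D hD => ?_
    have := card_add_one_of_mem_shadow F hFr D hD
    exact Finset.mem_powersetCard.2 ⟨Finset.subset_univ _, by omega⟩
  simp only [Fintype.card_fin] at hX
  have hr1 : r - 1 + 1 = r := by omega
  have hr2 : r - 1 - 1 = r - 2 := by omega
  rw [hr1, hr2] at hX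
  have hFG : F.card ≤ (S₀.card - 1) * F.shadow.card + G.card := by omega
  refine hFG.trans (Nat.add_le_add (Nat.mul_le_mul_left _ hFsh) ?_)
  calc G.card ≤ w * X.card := hGsh.trans (Nat.mul_le_mul_left _ hXsh)
    _ ≤ w * ((r - 1) * (r * w + w * 2 ^ w) * Fintype.card V ^ (r - 2)) :=
        Nat.mul_le_mul_left _ hX
    _ ≤ w * (r * (r * w + w * 2 ^ w) * Fintype.card V ^ (r - 2)) := by
        gcongr; omega
    _ = _ := by ring

/-- Sharper estimate for `2`-reducible `r`-trees, `r ≥ 4`: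
`ex(n,H) ≤ (σ-1)·C(n,r-1) + C·n^(r-2)` for a constant `C` depending only on `H` and `r`. -/
theorem exNum_upper_trees_sharper {α : Type*} [DecidableEq α]
    (r σ : ℕ) (hr : 4 ≤ r)
    (H : Finset (Finset α)) (htree : IsRTree r H) (hred : Reducible 2 H)
    (hσ : crossCutNum H = σ) :
    ∃ C : ℕ, 0 < C ∧ ∀ n : ℕ,
      exNum n r H ≤ (σ - 1) * Nat.choose n (r - 1) + C * n ^ (r - 2) := by
  obtain ⟨S, hS, hScard⟩ := exists_crossCut H hred
  rw [hσ] at hScard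
  let w := (H.sup id ∪ S).card
  refine ⟨w * (r * (r * w + w * 2 ^ w)) + 1, Nat.succ_pos _, fun n => ?_⟩
  refine csSup_le' ?_
  rintro _ ⟨F, hFr, hcopy, rfl⟩
  rcases F.eq_empty_or_nonempty with rfl | ⟨E₀, hE₀⟩
  · simp
  -- An edge of `F` is nonempty, so `Fin n` is, and `H = ∅` would embed by a constant map.
  obtain ⟨v, -⟩ : E₀.Nonempty := Finset.card_pos.1 (by rw [hFr E₀ hE₀]; omega)
  have : Nonempty (Fin n) := ⟨v⟩
  have hHne : H.Nonempty := by
    rw [Finset.nonempty_iff_ne_empty]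
    rintro rfl
    exact hcopy ⟨fun _ => v, by simp, by simp⟩
  have hSpos : 0 < S.card := by
    obtain ⟨E, hE⟩ := hHne
    refine lt_of_lt_of_le ?_ (Finset.card_le_card (Finset.inter_subset_right (s₁ := E)))
    rw [hS E hE]; exact Nat.one_pos
  have hmain := card_le_of_not_containsCopy (w := w) (by omega) F hFr H htree hred S hS hSpos le_rfl
    hcopy
  rw [Fintype.card_fin, hScard] at hmain
  refine hmain.trans (Nat.add_le_add_left ?_ _)
  exact Nat.mul_le_mul_right _ (Nat.le_succ _)

end
end
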